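/- arXiv:1911.11969 — 2 statements merged into one kernel-verified Lean document; each statement's English description precedes it below -/
import Mathlib

section
/- Fix an integer k ≥ 1 and let b_n^{(k)} denote the n-th element, in increasing order, of the set of positive integers that are products of exactly k distinct primes; set B_k(n) = b_n^{(k)}/n. Let f : ℕ → ℝ satisfy (log N)/f(N) → 0 and f(N)/(N/B_k(N)²)^{1/(2k+1)} → 0 as N → ∞. Then for every τ ∈ ℝ and every ε > 0 there is N₀ such that for every N ≥ N₀ and every δ with exp(−f(N)) ≤ δ ≤ 1/N₀, one has | #{ (s_1,…,s_N) ∈ {−1,1}^N : |τ − Σ_{n=1}^N s_n/b_n^{(k)}| < δ } − 2^{N+1} g(τ) δ | ≤ ε · 2^{N+1} δ, where g(x) = 2∫_0^∞ cos(2πux) ∏_{n=1}^∞ cos(2πu/b_n^{(k)}) du. In particular, for all sufficiently large N, 𝔪_N(τ) < exp(−f(N)). -/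
open Filter Real MeasureTheory

/-!
The sum `∑ s_n / b_n` with independent fair signs has characteristic function
`φ_N(v) = ∏_{n ≤ N} cos (2πv / b_n)`, so the number of sign choices within `δ` of `τ` is, after
smoothing the indicator at scale `δ`, a Fourier integral of `φ_N` over `|v| ≲ 1/δ`. If
`φ_N(v) = O(v⁻²)` uniformly up to `δ⁻²`, dominated convergence replaces `φ_N` by its limit and gives
`2^N · 2δ · g(τ)` (`smoothed_count_tendsto`, `count_tendsto`).

The decay is arithmetic. One has `|cos πz| ≤ exp (-2‖z‖²)`, where `‖z‖` is the distance from `z` to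
the nearest integer, and `‖x / b_n‖` is small only when `b_n` divides an integer close to `x`. An
integer of size `x` has `O((log x)^k)` divisors that are products of `k` distinct primes, so for at
least half of the `n ≤ N` the distance is `≫ N / (b_N (log x)^k)`. Hence `∑ ‖x / b_n‖² ≥ log x`
as soon as `N³ / b_N² ≫ (log x)^(2k+1)` (`sum_dist_ge`), which is what the upper bound on `f`
provides for `x` up to about `exp (2f)`. For smaller `x` a shorter product and the crude bound
`b_n ≪ n^(5/4)` suffice (`prod_cos_decay`).

The bound `𝔪_N(τ) < exp (-f N)` does not follow from the count unless `g(τ) ≠ 0`, and positivity of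
`g` is not used. Instead, the density of the series over even indices is nonzero at some `t₀`
(Fourier inversion, `exists_density_ne_zero`); greedy signs on the odd indices bring the odd part to
`τ - t₀`, and the counting asymptotics for the even part with the moving target tending to `t₀`
produce the remaining signs (`exists_signs_near`).
-/

/-! ### Divisors near a point and the size of cosine products -/

/-- `m` is a product of exactly `k` distinct primes. The body is the predicate enumerated by the
sequence `b` of the theorem. -/
def PrimeProd (k m : ℕ) : Prop := Squarefree m ∧ m.primeFactors.card = k

lemma card_primeFactors_le_log (m : ℕ) (hm : m ≠ 0) : m.primeFactors.card ≤ Nat.log 2 m := by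
  apply Nat.le_log_of_pow_le (by norm_num)
  calc 2 ^ m.primeFactors.card ≤ ∏ p ∈ m.primeFactors, p :=
        Finset.pow_card_le_prod _ _ _ (fun p hp => (Nat.prime_of_mem_primeFactors hp).two_le)
    _ ≤ m := Nat.le_of_dvd (Nat.pos_of_ne_zero hm) (Nat.prod_primeFactors_dvd m)

/-- A product of `k` distinct primes dividing `m` is determined by a `k`-subset of the prime factors
of `m`, so at most `(log₂ m)^k` of the `β n` divide `m`. -/
lemma card_dvd_le {k : ℕ} {β : ℕ → ℕ} (hβ : StrictMono β) (hP : ∀ n, PrimeProd k (β n))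
    (s : Finset ℕ) (m : ℕ) (hm : m ≠ 0) :
    (s.filter (fun n => β n ∣ m)).card ≤ (Nat.log 2 m) ^ k := by
  calc (s.filter (fun n => β n ∣ m)).card ≤ (m.primeFactors.powersetCard k).card := by
        apply Finset.card_le_card_of_injOn (fun n => (β n).primeFactors)
        · intro n hn
          have hn' := (Finset.mem_filter.mp hn).2
          exact Finset.mem_coe.mpr (Finset.mem_powersetCard.mpr
            ⟨Nat.primeFactors_mono hn' hm, (hP n).2⟩)
        · intro a _ c _ h
          apply hβ.injective
          rw [← Nat.prod_primeFactors_of_squarefree (hP a).1,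
            ← Nat.prod_primeFactors_of_squarefree (hP c).1]
          simp only at h
          rw [h]
    _ = (m.primeFactors.card).choose k := Finset.card_powersetCard _ _
    _ ≤ m.primeFactors.card ^ k := Nat.choose_le_pow _ _
    _ ≤ _ := Nat.pow_le_pow_left (card_primeFactors_le_log m hm) k

lemma log_two_mul_le {x : ℝ} (hx : 1 ≤ Real.log x) (hx0 : 0 < x) {m : ℕ} (hm : m ≠ 0) (hmx : (m : ℝ) ≤ 2 * x) :
    (Nat.log 2 m : ℝ) ≤ 3 * Real.log x := by
  have h1 : (Nat.log 2 m : ℝ) ≤ Real.logb 2 m := Real.natLog_le_logb m 2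
  have h2 : Real.logb 2 m * Real.log 2 = Real.log m := by
    rw [Real.logb, div_mul_cancel₀]; exact (Real.log_pos (by norm_num)).ne'
  have h3 : Real.log m ≤ Real.log 2 + Real.log x := by
    rw [← Real.log_mul (by norm_num) hx0.ne']
    exact Real.log_le_log (by positivity) hmx
  have := Real.log_two_gt_d9
  have := Real.log_two_lt_d9
  nlinarith

/-- Few of the `β n` have a multiple within `y` of `x`: each integer in `[x - y, x + y]` is at most
`2x`, hence is divisible by at most `(3 log x)^k` of them. -/
lemma card_near_le {k : ℕ} {β : ℕ → ℕ} (hβ : StrictMono β) (hP : ∀ n, PrimeProd k (β n))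
    (N : ℕ) (x y : ℝ) (hx : 1 ≤ Real.log x) (hx0 : 0 < x) (hy : 1 / 2 ≤ y) (hyx : y ≤ x / 2) :
    (((Finset.range N).filter (fun n => (β n : ℝ) * |x / β n - round (x / β n)| ≤ y)).card : ℝ)
      ≤ 4 * y * (3 * Real.log x) ^ k := by
  classical
  set T : Finset ℕ := Finset.Icc ⌈x - y⌉₊ ⌊x + y⌋₊
  have hT : ∀ m ∈ T, m ≠ 0 ∧ (m : ℝ) ≤ 2 * x := by
    intro m hm
    obtain ⟨h1, h2⟩ := Finset.mem_Icc.mp hm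
    have h1' : x - y ≤ m := Nat.ceil_le.mp h1
    have h2' : (m : ℝ) ≤ x + y := (Nat.le_floor_iff (by linarith)).mp h2
    refine ⟨?_, by linarith⟩
    rintro rfl
    simp at h1'
    linarith
  have hsub : (Finset.range N).filter (fun n => (β n : ℝ) * |x / β n - round (x / β n)| ≤ y)
      ⊆ T.biUnion (fun m => (Finset.range N).filter (fun n => β n ∣ m)) := by
    intro n hn
    obtain ⟨hnN, hn⟩ := Finset.mem_filter.mp hn
    have hb : 0 < β n := Nat.pos_of_ne_zero (hP n).1.ne_zero
    have hb' : (0 : ℝ) < β n := by exact_mod_cast hb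
    have habs : |x - β n * round (x / β n)| ≤ y := by
      calc |x - β n * round (x / β n)| = |(β n : ℝ) * (x / β n - round (x / β n))| := by
            congr 1; field_simp
        _ = (β n : ℝ) * |x / β n - round (x / β n)| := by rw [abs_mul, abs_of_pos hb']
        _ ≤ y := hn
    obtain ⟨h1, h2⟩ := abs_le.mp habs
    have hr : 0 ≤ round (x / β n) := by
      rw [round_eq]; exact Int.floor_nonneg.mpr (by positivity)
    obtain ⟨r, hr⟩ := Int.eq_ofNat_of_zero_le hr
    rw [hr] at h1 h2
    push_cast at h1 h2
    refine Finset.mem_biUnion.mpr ⟨β n * r, Finset.mem_Icc.mpr ⟨?_, ?_⟩, ?_⟩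
    · apply Nat.ceil_le.mpr; push_cast; linarith
    · apply Nat.le_floor; push_cast; linarith
    · exact Finset.mem_filter.mpr ⟨hnN, Dvd.intro _ rfl⟩
  have hcardT : (T.card : ℝ) ≤ 4 * y := by
    have h0 : 0 ≤ x - y := by linarith
    rw [Nat.card_Icc]
    have hle : ⌈x - y⌉₊ ≤ ⌊x + y⌋₊ + 1 := by
      have : (⌈x - y⌉₊ : ℝ) < (⌊x + y⌋₊ : ℝ) + 1 + 1 := by
        have := Nat.ceil_lt_add_one h0
        have := Nat.lt_floor_add_one (x + y)
        linarith
      have : ⌈x - y⌉₊ < ⌊x + y⌋₊ + 1 + 1 := by exact_mod_cast this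
      omega
    rw [Nat.cast_sub hle]
    push_cast
    have := Nat.le_ceil (x - y)
    have := Nat.floor_le (show 0 ≤ x + y by linarith)
    linarith
  calc (((Finset.range N).filter (fun n => (β n : ℝ) * |x / β n - round (x / β n)| ≤ y)).card : ℝ)
      ≤ ((T.biUnion (fun m => (Finset.range N).filter (fun n => β n ∣ m))).card : ℝ) := by
        exact_mod_cast Finset.card_le_card hsub
    _ ≤ ∑ m ∈ T, (((Finset.range N).filter (fun n => β n ∣ m)).card : ℝ) := by
        exact_mod_cast Finset.card_biUnion_le
    _ ≤ ∑ m ∈ T, (3 * Real.log x) ^ k := by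
        apply Finset.sum_le_sum
        intro m hm
        calc (((Finset.range N).filter (fun n => β n ∣ m)).card : ℝ) ≤ (Nat.log 2 m : ℝ) ^ k := by
              exact_mod_cast card_dvd_le hβ hP _ m (hT m hm).1
          _ ≤ _ := pow_le_pow_left₀ (by positivity) (log_two_mul_le hx hx0 (hT m hm).1 (hT m hm).2) k
    _ = T.card * (3 * Real.log x) ^ k := by simp
    _ ≤ _ := by gcongr

/-- When `N³ / β(N-1)²` dominates `(log x)^(2k+1)`, the numbers `x / β n` are on average far enough
from the integers for their squared distances to add up to at least `log x`. -/
lemma sum_dist_ge {k : ℕ} {β : ℕ → ℕ} (hβ : StrictMono β) (hP : ∀ n, PrimeProd k (β n))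
    (N : ℕ) (hN : 1 ≤ N) (x : ℝ) (hx : 1 ≤ Real.log x) (hx0 : 0 < x) (hNx : (N : ℝ) ≤ x)
    (h : 256 * 9 ^ k * (Real.log x) ^ (2 * k + 1) * (β (N - 1) : ℝ) ^ 2 ≤ (N : ℝ) ^ 3) :
    Real.log x ≤ ∑ n ∈ Finset.range N, |x / β n - round (x / β n)| ^ 2 := by
  classical
  set L := Real.log x with hL
  have hNpos : (0 : ℝ) < N := by exact_mod_cast hN
  have hbN : (N : ℝ) ≤ β (N - 1) := by
    have h1 : N - 1 + 1 ≤ β (N - 1) := by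
      have h0 : 1 ≤ β 0 := Nat.pos_of_ne_zero (hP 0).1.ne_zero
      have : ∀ n, n + 1 ≤ β n := by
        intro n
        induction n with
        | zero => simpa using h0
        | succ n ih => have := hβ (Nat.lt_add_one n); omega
      exact this _
    have : N ≤ β (N - 1) := by omega
    exact_mod_cast this
  set b : ℝ := (β (N - 1) : ℝ)
  have hb : 0 < b := hNpos.trans_le hbN
  have hLk : 0 < (3 * L) ^ k := by positivity
  set y : ℝ := N / (8 * (3 * L) ^ k) with hy
  have h9 : (9 : ℝ) ^ k = 3 ^ k * 3 ^ k := by rw [← mul_pow]; norm_num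
  have h3k : (1 : ℝ) ≤ 3 ^ k := one_le_pow₀ (by norm_num)
  have hLk1 : (1 : ℝ) ≤ L ^ k := one_le_pow₀ hx
  have hNL : 256 * 9 ^ k * L ^ (2 * k + 1) ≤ N := by
    have : 256 * 9 ^ k * L ^ (2 * k + 1) * (N : ℝ) ^ 2 ≤ N * (N : ℝ) ^ 2 := by
      calc 256 * 9 ^ k * L ^ (2 * k + 1) * (N : ℝ) ^ 2 ≤ 256 * 9 ^ k * L ^ (2 * k + 1) * b ^ 2 := by
            gcongr
        _ ≤ (N : ℝ) ^ 3 := h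
        _ = _ := by ring
    exact le_of_mul_le_mul_right this (by positivity)
  have hy1 : 1 / 2 ≤ y := by
    rw [hy, le_div_iff₀ (by positivity)]
    refine le_trans ?_ hNL
    have : L ^ (2 * k + 1) = L ^ k * (L ^ k * L) := by ring
    rw [this, h9, mul_pow]
    have h4 : (1 : ℝ) ≤ L ^ k * L := by nlinarith
    have h5 : (1 : ℝ) ≤ 3 ^ k * (L ^ k * L) := by nlinarith
    have h6 : (0 : ℝ) < 3 ^ k * L ^ k := by positivity
    nlinarith
  have hy2 : y ≤ x / 2 := by
    rw [hy, div_le_iff₀ (by positivity)]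
    have : (1 : ℝ) ≤ (3 * L) ^ k := one_le_pow₀ (by linarith)
    nlinarith
  -- `y` is chosen so that at most half of the indices `n < N` are exceptional.
  have hc := card_near_le hβ hP N x y hx hx0 hy1 hy2
  have hyN : 4 * y * (3 * L) ^ k = N / 2 := by rw [hy]; field_simp; norm_num
  rw [hyN] at hc
  -- `G`: indices with a multiple of `β n` near `x`; `F`: the others, which carry the sum.
  set G := (Finset.range N).filter (fun n => (β n : ℝ) * |x / β n - round (x / β n)| ≤ y)
  set F := (Finset.range N).filter (fun n => ¬ (β n : ℝ) * |x / β n - round (x / β n)| ≤ y)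
  have hGF : (G.card : ℝ) + F.card = N := by
    have := Finset.card_filter_add_card_filter_not (s := Finset.range N)
      (fun n => (β n : ℝ) * |x / β n - round (x / β n)| ≤ y)
    rw [Finset.card_range] at this
    exact_mod_cast this
  calc L ≤ (N / 2) * (y / b) ^ 2 := by
        have : (N : ℝ) / 2 * (y / b) ^ 2 = N ^ 3 / (128 * 9 ^ k * L ^ (2 * k) * b ^ 2) := by
          rw [hy, h9, mul_pow]; field_simp; ring
        rw [this, le_div_iff₀ (by positivity)]
        refine le_trans ?_ h
        have : L * (128 * 9 ^ k * L ^ (2 * k) * b ^ 2) = 128 * 9 ^ k * L ^ (2 * k + 1) * b ^ 2 := by ring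
        rw [this]
        gcongr
        norm_num
    _ ≤ F.card * (y / b) ^ 2 := by gcongr; linarith
    _ = ∑ n ∈ F, (y / b) ^ 2 := by simp
    _ ≤ ∑ n ∈ F, |x / β n - round (x / β n)| ^ 2 := by
        apply Finset.sum_le_sum
        intro n hn
        obtain ⟨hn1, hn2⟩ := Finset.mem_filter.mp hn
        push Not at hn2
        have hbn : (0 : ℝ) < β n := by exact_mod_cast Nat.pos_of_ne_zero (hP n).1.ne_zero
        have hbnN : (β n : ℝ) ≤ b := by
          have : n ≤ N - 1 := by have := Finset.mem_range.mp hn1; omega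
          exact Nat.cast_le.mpr (hβ.monotone this)
        gcongr
        rw [div_le_iff₀ hb]
        calc y ≤ (β n : ℝ) * |x / β n - round (x / β n)| := hn2.le
          _ ≤ b * |x / β n - round (x / β n)| := by gcongr
          _ = _ := mul_comm _ _
    _ ≤ _ := Finset.sum_le_sum_of_subset_of_nonneg (Finset.filter_subset _ _)
        (fun _ _ _ => by positivity)

lemma abs_cos_pi_mul_le (z : ℝ) : |Real.cos (π * z)| ≤ Real.exp (-2 * |z - round z| ^ 2) := by
  have h1 : |Real.cos (π * z)| = |Real.cos (π * (z - round z))| := by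
    have : π * (z - round z) = π * z - (round z : ℤ) * π := by ring
    rw [this, Real.cos_sub_int_mul_pi, abs_mul]
    simp
  set d := z - round z
  have hd : |d| ≤ 1 / 2 := abs_sub_round z
  have hpd : |π * d| ≤ π / 2 := by
    rw [abs_mul, abs_of_pos Real.pi_pos]; nlinarith [Real.pi_pos]
  rw [h1, abs_of_nonneg (Real.cos_nonneg_of_mem_Icc (abs_le.mp hpd))]
  have h2 := Real.cos_le_one_sub_mul_cos_sq (x := π * d) (by linarith [Real.pi_pos])
  have h3 : 1 - 2 / π ^ 2 * (π * d) ^ 2 = 1 - 2 * d ^ 2 := by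
    field_simp
  rw [h3] at h2
  rw [sq_abs]
  linarith [Real.add_one_le_exp (-2 * d ^ 2)]

lemma abs_prod_cos_le (β : ℕ → ℕ) (N : ℕ) (x : ℝ)
    (h : Real.log x ≤ ∑ n ∈ Finset.range N, |x / β n - round (x / β n)| ^ 2) (hx : 0 < x) :
    |∏ n ∈ Finset.range N, Real.cos (π * x / β n)| ≤ (x ^ 2)⁻¹ := by
  rw [Finset.abs_prod]
  calc ∏ n ∈ Finset.range N, |Real.cos (π * x / β n)|
      ≤ ∏ n ∈ Finset.range N, Real.exp (-2 * |x / β n - round (x / β n)| ^ 2) := by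
        apply Finset.prod_le_prod (fun _ _ => abs_nonneg _)
        intro n _
        rw [mul_div_assoc]
        exact abs_cos_pi_mul_le _
    _ = Real.exp (-2 * ∑ n ∈ Finset.range N, |x / β n - round (x / β n)| ^ 2) := by
        rw [← Real.exp_sum, Finset.mul_sum]
    _ ≤ Real.exp (-2 * Real.log x) := by
        apply Real.exp_le_exp.mpr; linarith
    _ = _ := by
        rw [show -2 * Real.log x = -(Real.log x + Real.log x) by ring, Real.exp_neg, Real.exp_add,
          Real.exp_log hx, sq]

/-- Extra cosine factors can only decrease the product in absolute value. -/
lemma abs_prod_cos_mono (c : ℕ → ℝ) {M N : ℕ} (h : M ≤ N) :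
    |∏ n ∈ Finset.range N, Real.cos (c n)| ≤ |∏ n ∈ Finset.range M, Real.cos (c n)| := by
  rw [← Finset.prod_range_mul_prod_Ico _ h, abs_mul]
  refine mul_le_of_le_one_right (abs_nonneg _) ?_
  rw [Finset.abs_prod]
  exact Finset.prod_le_one (fun _ _ => abs_nonneg _) (fun _ _ => Real.abs_cos_le_one _)

/-! ### Growth of the sequence and greedy signs -/

lemma primeProd_prod {S : Finset ℕ} (hS : ∀ p ∈ S, p.Prime) : PrimeProd S.card (∏ p ∈ S, p) := by
  refine ⟨?_, by rw [Nat.primeFactors_prod hS]⟩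
  apply Finset.squarefree_prod_of_pairwise_isCoprime
  · intro p hp q hq hpq
    exact Nat.coprime_iff_isRelPrime.mp ((Nat.coprime_primes (hS p hp) (hS q hq)).mpr hpq)
  · intro p hp
    exact (hS p hp).prime.squarefree

/-- Multiplying all large primes by the product of the first `k - 1` primes gives products of `k`
distinct primes. -/
lemma exists_primeProd_mul (k : ℕ) (hk : 1 ≤ k) : ∃ q : ℕ, 0 < q ∧
    ∀ j, PrimeProd k (q * Nat.nth Nat.Prime (j + (k - 1))) := by
  have hinj : Function.Injective (Nat.nth Nat.Prime) := Nat.nth_injective Nat.infinite_setOfPred_prime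
  have hpr : ∀ n, (Nat.nth Nat.Prime n).Prime := fun n => Nat.prime_nth_prime n
  refine ⟨∏ p ∈ (Finset.range (k - 1)).image (Nat.nth Nat.Prime), p, ?_, ?_⟩
  · apply Finset.prod_pos
    intro p hp
    obtain ⟨i, -, rfl⟩ := Finset.mem_image.mp hp
    exact (hpr i).pos
  · intro j
    have hnot : Nat.nth Nat.Prime (j + (k - 1)) ∉ (Finset.range (k - 1)).image (Nat.nth Nat.Prime) := by
      intro h
      obtain ⟨i, hi, h⟩ := Finset.mem_image.mp h
      have := hinj h
      have := Finset.mem_range.mp hi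
      omega
    have := primeProd_prod (S := insert (Nat.nth Nat.Prime (j + (k - 1)))
      ((Finset.range (k - 1)).image (Nat.nth Nat.Prime))) (by
        intro p hp
        rcases Finset.mem_insert.mp hp with rfl | hp
        · exact hpr _
        · obtain ⟨i, -, rfl⟩ := Finset.mem_image.mp hp
          exact hpr i)
    rw [Finset.card_insert_of_notMem hnot, Finset.card_image_of_injective _ hinj,
      Finset.card_range, Finset.prod_insert hnot, Nat.sub_add_cancel hk] at this
    rwa [mul_comm]

lemma primeProd_infinite (k : ℕ) (hk : 1 ≤ k) : (Set.ofPred (PrimeProd k)).Infinite := by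
  obtain ⟨q, hq, h⟩ := exists_primeProd_mul k hk
  refine Set.infinite_of_injective_forall_mem
    (f := fun j => q * Nat.nth Nat.Prime (j + (k - 1))) ?_ h
  intro i j hij
  have h1 := Nat.eq_of_mul_eq_mul_left hq hij
  have := Nat.nth_injective Nat.infinite_setOfPred_prime h1
  omega

lemma nth_primeProd_le (k : ℕ) (hk : 1 ≤ k) : ∃ q : ℕ, 0 < q ∧
    ∀ n, Nat.nth (PrimeProd k) n ≤ q * Nat.nth Nat.Prime (n + (k - 1)) := by
  obtain ⟨q, hq, h⟩ := exists_primeProd_mul k hk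
  refine ⟨q, hq, fun n => ?_⟩
  refine Nat.nth_le_of_strictMonoOn_of_mapsTo (p := PrimeProd k)
    (fun j => q * Nat.nth Nat.Prime (j + (k - 1))) (fun j _ => h j) ?_
  intro i _ j _ hij
  exact Nat.mul_lt_mul_of_pos_left
    (Nat.nth_strictMono Nat.infinite_setOfPred_prime (by omega)) hq

lemma not_summable_one_div_nth_prime (c : ℕ) :
    ¬ Summable (fun n : ℕ => (1 : ℝ) / Nat.nth Nat.Prime (n + c)) := by
  intro h
  have h0 : Summable (fun n : ℕ => (1 : ℝ) / Nat.nth Nat.Prime n) := (summable_nat_add_iff c).mp h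
  apply Nat.Primes.not_summable_one_div
  have hbij : Function.Bijective
      (fun n : ℕ => (⟨Nat.nth Nat.Prime n, Nat.prime_nth_prime n⟩ : Nat.Primes)) := by
    constructor
    · intro i j hij
      exact Nat.nth_injective Nat.infinite_setOfPred_prime (congrArg Subtype.val hij)
    · intro p
      exact ⟨Nat.count Nat.Prime p, Subtype.ext (Nat.nth_count p.2)⟩
  exact (Equiv.ofBijective _ hbij).summable_iff.mp h0

/-- Chebyshev's lower bound for `π` gives `p_n ≪ n log n`; the exponent `5/4` is a convenient
weakening, any exponent below `3/2` being enough for `tendsto_density`. -/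
lemma nth_prime_growth : ∀ᶠ n : ℕ in atTop,
    (Nat.nth Nat.Prime n : ℝ) ≤ ((n : ℝ) + 1) ^ ((5 : ℝ) / 4) := by
  have htop : Tendsto (fun n : ℕ => (Nat.nth Nat.Prime n : ℝ)) atTop atTop :=
    tendsto_natCast_atTop_atTop.comp
      (Nat.nth_strictMono Nat.infinite_setOfPred_prime).tendsto_atTop
  have h1 := (isLittleO_log_rpow_atTop (r := 1 / 5) (by norm_num)).bound
    (show (0 : ℝ) < 1 / 8 by norm_num)
  filter_upwards [htop.eventually h1, htop.eventually_ge_atTop 2] with n hn hn2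
  set p := Nat.nth Nat.Prime n with hp
  have hlogpos : 0 < Real.log p := Real.log_pos (by linarith)
  have hppos : (0 : ℝ) < p := by linarith
  have hpi := Chebyshev.pi_ge p
  have hcount : Nat.primeCounting p = n + 1 := by
    have h1 : Nat.primeCounting p = Nat.count Nat.Prime (p + 1) := rfl
    rw [h1, hp, Nat.count_nth_succ_of_infinite Nat.infinite_setOfPred_prime]
  rw [hcount, div_le_iff₀ hlogpos] at hpi
  rw [Real.norm_of_nonneg hlogpos.le, Real.norm_of_nonneg (by positivity)] at hn
  have hlog1 : Real.log ((p : ℝ) + 1) ≤ 2 * Real.log p := by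
    rw [show 2 * Real.log p = Real.log ((p : ℝ) ^ 2) by rw [Real.log_pow]; norm_num]
    exact Real.log_le_log (by linarith) (by nlinarith)
  have hr : (p : ℝ) ^ ((1 : ℝ) / 5) ≤ p := by
    conv_rhs => rw [← Real.rpow_one (p : ℝ)]
    exact Real.rpow_le_rpow_of_exponent_le (by linarith) (by norm_num)
  have hr0 : 0 < (p : ℝ) ^ ((1 : ℝ) / 5) := by positivity
  push_cast at hpi
  have h3 : (p : ℝ) / 4 ≤ (n + 1) * (1 / 8 * (p : ℝ) ^ ((1 : ℝ) / 5)) := by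
    have := Real.log_two_gt_d9
    have : ((n : ℝ) + 1) * Real.log p ≤ (n + 1) * (1 / 8 * (p : ℝ) ^ ((1 : ℝ) / 5)) := by gcongr
    nlinarith
  have h4 : (p : ℝ) = (p : ℝ) ^ ((4 : ℝ) / 5) * (p : ℝ) ^ ((1 : ℝ) / 5) := by
    rw [← Real.rpow_add hppos]; norm_num
  have h5 : (p : ℝ) ^ ((4 : ℝ) / 5) ≤ n + 1 := by
    have : (p : ℝ) ^ ((4 : ℝ) / 5) * (p : ℝ) ^ ((1 : ℝ) / 5) ≤ (n + 1) * (p : ℝ) ^ ((1 : ℝ) / 5) := by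
      rw [← h4]
      have : (0 : ℝ) ≤ (n + 1) * (p : ℝ) ^ ((1 : ℝ) / 5) := by positivity
      linarith
    exact le_of_mul_le_mul_right this hr0
  calc (p : ℝ) = ((p : ℝ) ^ ((4 : ℝ) / 5)) ^ ((5 : ℝ) / 4) := by
        rw [← Real.rpow_mul hppos.le]; norm_num
    _ ≤ _ := by gcongr

lemma primeProd_growth (k : ℕ) (hk : 1 ≤ k) : ∃ C : ℝ, 0 < C ∧ ∀ᶠ n : ℕ in atTop,
    (Nat.nth (PrimeProd k) n : ℝ) ≤ C * ((n : ℝ) + 1) ^ ((5 : ℝ) / 4) := by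
  obtain ⟨q, hq, h⟩ := nth_primeProd_le k hk
  refine ⟨q * ((k : ℝ)) ^ ((5 : ℝ) / 4), by positivity, ?_⟩
  filter_upwards [(tendsto_add_atTop_nat (k - 1)).eventually nth_prime_growth] with n hn
  calc (Nat.nth (PrimeProd k) n : ℝ) ≤ q * Nat.nth Nat.Prime (n + (k - 1)) := by exact_mod_cast h n
    _ ≤ q * (((n + (k - 1) : ℕ) : ℝ) + 1) ^ ((5 : ℝ) / 4) := by gcongr
    _ ≤ q * ((k : ℝ) * ((n : ℝ) + 1)) ^ ((5 : ℝ) / 4) := by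
        gcongr
        have : (n + (k - 1)) + 1 ≤ k * (n + 1) := by
          obtain ⟨j, rfl⟩ := Nat.exists_eq_add_of_le hk
          have : 1 + j - 1 = j := by omega
          rw [this]; nlinarith
        exact_mod_cast this
    _ = _ := by rw [Real.mul_rpow (by positivity) (by positivity)]; ring

lemma primeProd_not_summable (k : ℕ) (hk : 1 ≤ k) :
    ¬ Summable (fun n : ℕ => (1 : ℝ) / Nat.nth (PrimeProd k) n) := by
  intro hs
  obtain ⟨q, hq, h⟩ := nth_primeProd_le k hk
  apply not_summable_one_div_nth_prime (k - 1)
  have h2 := hs.mul_left (q : ℝ)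
  refine h2.of_nonneg_of_le (fun n => by positivity) (fun n => ?_)
  have hpos : 0 < Nat.nth (PrimeProd k) n :=
    Nat.pos_of_ne_zero (Nat.nth_mem_of_infinite (primeProd_infinite k hk) n).1.ne_zero
  have hpos2 : 0 < Nat.nth Nat.Prime (n + (k - 1)) := (Nat.prime_nth_prime _).pos
  rw [mul_one_div, div_le_div_iff₀ (by exact_mod_cast hpos2) (by exact_mod_cast hpos), one_mul]
  exact_mod_cast h n

/-- If `β n ≤ C (n+1)^(5/4)` eventually, then `M³ / β(M-1)²` grows faster than any power of
`log M`. -/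
lemma tendsto_density (k : ℕ) (β : ℕ → ℕ) (C : ℝ)
    (h : ∀ᶠ n : ℕ in atTop, (β n : ℝ) ≤ C * ((n : ℝ) + 1) ^ ((5 : ℝ) / 4)) :
    Tendsto (fun M : ℕ => Real.log M ^ (2 * k + 1) * (β (M - 1) : ℝ) ^ 2 / (M : ℝ) ^ 3)
      atTop (nhds 0) := by
  have h0 : Tendsto (fun M : ℕ => C ^ 2 * (Real.log M ^ (2 * k + 1) / (M : ℝ) ^ ((1 : ℝ) / 2)))
      atTop (nhds 0) := by
    have := (isLittleO_log_rpow_rpow_atTop ((2 * k + 1 : ℕ) : ℝ)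
      (show (0 : ℝ) < 1 / 2 by norm_num)).tendsto_div_nhds_zero.comp
      (tendsto_natCast_atTop_atTop (R := ℝ))
    have := this.const_mul (C ^ 2)
    simp only [Function.comp_def, Real.rpow_natCast, mul_zero] at this
    exact this
  refine squeeze_zero' (Eventually.of_forall fun M => ?_) ?_ h0
  · have : 0 ≤ Real.log M := Real.log_natCast_nonneg M
    positivity
  · filter_upwards [(tendsto_sub_atTop_nat 1).eventually h, eventually_ge_atTop 1] with M hM hM1
    have hMpos : (0 : ℝ) < M := by exact_mod_cast hM1
    have : ((M - 1 : ℕ) : ℝ) + 1 = M := by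
      rw [Nat.cast_sub hM1]; push_cast; ring
    rw [this] at hM
    have hL : 0 ≤ Real.log M := Real.log_natCast_nonneg M
    calc Real.log M ^ (2 * k + 1) * (β (M - 1) : ℝ) ^ 2 / (M : ℝ) ^ 3
        ≤ Real.log M ^ (2 * k + 1) * (C * (M : ℝ) ^ ((5 : ℝ) / 4)) ^ 2 / (M : ℝ) ^ 3 := by gcongr
      _ = C ^ 2 * (Real.log M ^ (2 * k + 1) * (((M : ℝ) ^ ((5 : ℝ) / 4)) ^ 2 / (M : ℝ) ^ 3)) := by ring
      _ = _ := by
        rw [div_eq_mul_inv (Real.log M ^ (2 * k + 1)), ← Real.rpow_natCast (_ ^ ((5 : ℝ) / 4)), ← Real.rpow_mul hMpos.le,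
          ← Real.rpow_natCast (M : ℝ) 3, ← Real.rpow_sub hMpos, ← Real.rpow_neg hMpos.le]
        norm_num

/-- Greedy signs: any target is the limit of signed partial sums of a divergent series of positive
terms tending to zero. -/
lemma exists_signs_tendsto (a : ℕ → ℝ) (ha : ∀ n, 0 < a n) (ha0 : Tendsto a atTop (nhds 0))
    (hs : ¬ Summable a) (T : ℝ) : ∃ s : ℕ → ℝ, (∀ n, s n = 1 ∨ s n = -1) ∧
      Tendsto (fun N => ∑ n ∈ Finset.range N, s n * a n) atTop (nhds T) := by
  set σ : ℝ → ℝ := fun p => if p ≤ T then 1 else -1 with hσ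
  obtain ⟨P, hP0, hP⟩ : ∃ P : ℕ → ℝ, P 0 = 0 ∧ ∀ n, P (n + 1) = P n + σ (P n) * a n :=
    ⟨fun n => Nat.rec 0 (fun n p => p + σ p * a n) n, rfl, fun n => rfl⟩
  refine ⟨fun n => σ (P n), fun n => ?_, ?_⟩
  · by_cases h : P n ≤ T <;> simp [hσ, h]
  have hsum : ∀ N, ∑ n ∈ Finset.range N, σ (P n) * a n = P N := by
    intro N
    induction N with
    | zero => exact hP0.symm
    | succ N ih => rw [Finset.sum_range_succ, ih, hP]
  simp only [hsum]
  -- A greedy step replaces the distance `d` to the target by `|d - a n|`.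
  have hd : ∀ n, |P (n + 1) - T| = |(|P n - T| - a n)| := by
    intro n
    rw [hP]
    simp only [hσ]
    split_ifs with h
    · rw [abs_of_nonpos (show P n - T ≤ 0 by linarith), ← abs_neg]; congr 1; ring
    · rw [abs_of_pos (show 0 < P n - T by linarith)]; congr 1; ring
  rw [Metric.tendsto_atTop]
  intro ε hε
  obtain ⟨n1, hn1⟩ := (Metric.tendsto_atTop.mp ha0) ε hε
  have han : ∀ n ≥ n1, a n < ε := fun n hn => by
    have := hn1 n hn
    rw [Real.dist_eq, sub_zero, abs_of_pos (ha n)] at this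
    exact this
  -- Otherwise the distance would decrease by `a n` at every step, bounding the partial sums of `a`.
  have hex : ∃ n2 ≥ n1, |P n2 - T| < ε := by
    by_contra! hcon
    apply hs
    rw [← summable_nat_add_iff n1]
    have hbound : ∀ m, ∑ i ∈ Finset.range m, a (i + n1) = |P n1 - T| - |P (m + n1) - T| := by
      intro m
      induction m with
      | zero => simp
      | succ m ih =>
        rw [Finset.sum_range_succ, ih, show m + 1 + n1 = (m + n1) + 1 by ring, hd,
          abs_of_nonneg (a := |P (m + n1) - T| - a (m + n1))]
        · ring
        · have := hcon (m + n1) (by omega)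
          have := han (m + n1) (by omega)
          linarith
    refine summable_of_sum_range_le (c := |P n1 - T|) (fun n => (ha _).le) (fun m => ?_)
    rw [hbound]
    linarith [abs_nonneg (P (m + n1) - T)]
  obtain ⟨n2, hn2, h2⟩ := hex
  refine ⟨n2, fun n hn => ?_⟩
  rw [Real.dist_eq]
  induction n, hn using Nat.le_induction with
  | base => exact h2
  | succ n hn ih =>
    rw [hd, abs_lt]
    have := han n (by omega)
    have := ha n
    have := abs_nonneg (P n - T)
    constructor <;> linarith

/-! ### Uniform decay of truncated products -/

/-- Decay of the truncated cosine products up to `2 / δ²`. Small `x` are handled with about `√x`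
factors and the growth of `β` alone; large `x` use all `N` factors, where `log x ≪ log (1/δ)` is
controlled by `hNδ`. -/
lemma prod_cos_decay {k : ℕ} {β : ℕ → ℕ} (hβ : StrictMono β) (hP : ∀ n, PrimeProd k (β n))
    (hgrow : Tendsto (fun M : ℕ => Real.log M ^ (2 * k + 1) * (β (M - 1) : ℝ) ^ 2 / (M : ℝ) ^ 3)
      atTop (nhds 0))
    {ι : Type*} {l : Filter ι} {N : ι → ℕ} {δ : ι → ℝ} (hN : Tendsto N l atTop)
    (hδ : Tendsto δ l (nhds 0)) (hδ0 : ∀ᶠ i in l, 0 < δ i)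
    (hNδ : Tendsto (fun i => Real.log (1 / δ i) ^ (2 * k + 1) * (β (N i - 1) : ℝ) ^ 2 / (N i : ℝ) ^ 3)
      l (nhds 0)) :
    ∃ x0 : ℝ, 1 ≤ x0 ∧ ∀ᶠ i in l, ∀ x, x0 ≤ x → x ≤ 2 * ((δ i) ^ 2)⁻¹ →
      |∏ n ∈ Finset.range (N i), Real.cos (π * x / β n)| ≤ (x ^ 2)⁻¹ := by
  set c : ℝ := 256 * 9 ^ k with hc
  have hcpos : 0 < c := by positivity
  -- The density condition for all large `M`, with the constant needed for `M ≈ √x`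
  obtain ⟨M0, hM0⟩ := eventually_atTop.mp (hgrow.eventually_le_const
    (show (0 : ℝ) < (c * 4 ^ (2 * k + 1))⁻¹ by positivity))
  have hx0 : ∃ x0 : ℝ, Real.exp 1 ≤ x0 ∧ ∀ x, x0 ≤ x → max (M0 : ℝ) 2 ≤ √x - 1 := by
    refine ⟨max (Real.exp 1) ((max (M0 : ℝ) 2 + 1) ^ 2), le_max_left _ _, fun x hx => ?_⟩
    have := Real.le_sqrt_of_sq_le ((le_max_right _ _).trans hx)
    linarith
  obtain ⟨x0, hx0e, hx0⟩ := hx0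
  refine ⟨x0, by linarith [Real.add_one_le_exp (1 : ℝ)], ?_⟩
  have hδsmall := hδ.eventually_le_const (show (0 : ℝ) < 1 / 2 by norm_num)
  have hNδ' := hNδ.eventually_le_const (show (0 : ℝ) < (c * 3 ^ (2 * k + 1))⁻¹ by positivity)
  filter_upwards [hδ0, hδsmall, hNδ', hN.eventually_ge_atTop 1] with i h1 h2 h3 h4 x hx1 hx2
  have hxe : Real.exp 1 ≤ x := hx0e.trans hx1
  have hxpos : 0 < x := (Real.exp_pos 1).trans_le hxe
  have hlx : 1 ≤ Real.log x := by rwa [Real.le_log_iff_exp_le hxpos]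
  have hNpos : (0 : ℝ) < N i := by exact_mod_cast h4
  have hsx := hx0 x hx1
  have hsq : √x * √x = x := Real.mul_self_sqrt hxpos.le
  have hs2 : 3 ≤ √x := by linarith [le_max_right (M0 : ℝ) 2]
  by_cases hcase : (N i : ℝ) ≤ √x
  · -- All `N i` factors are used, and `hNδ` applies because `log x ≤ 3 log (1/δ)`.
    apply abs_prod_cos_le _ _ _ _ hxpos
    apply sum_dist_ge hβ hP (N i) h4 x hlx hxpos (by nlinarith)
    have hlog : Real.log x ≤ 3 * Real.log (1 / δ i) := by
      have e1 : Real.log x ≤ Real.log (2 * ((δ i) ^ 2)⁻¹) := Real.log_le_log hxpos hx2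
      have e2 : Real.log (2 * ((δ i) ^ 2)⁻¹) = Real.log 2 + 2 * Real.log (1 / δ i) := by
        rw [Real.log_mul (by norm_num) (by positivity), Real.log_inv, Real.log_pow, one_div,
          Real.log_inv]
        push_cast; ring
      have e3 : Real.log 2 ≤ Real.log (1 / δ i) := by
        apply Real.log_le_log (by norm_num)
        rw [le_div_iff₀ h1]; linarith
      linarith
    rw [div_le_iff₀ (by positivity), inv_mul_eq_div, le_div_iff₀ (by positivity)] at h3
    calc c * Real.log x ^ (2 * k + 1) * (β (N i - 1) : ℝ) ^ 2
        ≤ c * (3 * Real.log (1 / δ i)) ^ (2 * k + 1) * (β (N i - 1) : ℝ) ^ 2 := by gcongr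
      _ = Real.log (1 / δ i) ^ (2 * k + 1) * (β (N i - 1) : ℝ) ^ 2 * (c * 3 ^ (2 * k + 1)) := by
        rw [mul_pow]; ring
      _ ≤ _ := h3
  · -- Only the first `⌊√x⌋` factors are used.
    push Not at hcase
    set M := ⌊√x⌋₊ with hM
    have hMle : (M : ℝ) ≤ √x := Nat.floor_le (Real.sqrt_nonneg x)
    have hMlt : √x < M + 1 := Nat.lt_floor_add_one _
    have hMN : M ≤ N i := by
      have : (M : ℝ) < N i := hMle.trans_lt hcase
      exact_mod_cast this.le
    have hM2 : (2 : ℝ) < M := by linarith [le_max_right (M0 : ℝ) 2]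
    have hMM0 : M0 ≤ M := by
      have : (M0 : ℝ) ≤ M := by linarith [le_max_left (M0 : ℝ) 2]
      exact_mod_cast this
    refine (abs_prod_cos_mono _ hMN).trans ?_
    apply abs_prod_cos_le _ _ _ _ hxpos
    apply sum_dist_ge hβ hP M (by have : 2 < M := by exact_mod_cast hM2
                                  omega) x hlx hxpos (by nlinarith)
    have hlog : Real.log x ≤ 4 * Real.log M := by
      have e1 : Real.log x ≤ Real.log ((M : ℝ) ^ 4) := by
        apply Real.log_le_log hxpos
        have : √x ≤ (M : ℝ) ^ 2 := by nlinarith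
        calc x = √x * √x := hsq.symm
          _ ≤ (M : ℝ) ^ 2 * (M : ℝ) ^ 2 := by gcongr
          _ = _ := by ring
      rw [Real.log_pow] at e1
      exact_mod_cast e1
    have h3 := hM0 M hMM0
    rw [div_le_iff₀ (by positivity), inv_mul_eq_div, le_div_iff₀ (by positivity)] at h3
    calc c * Real.log x ^ (2 * k + 1) * (β (M - 1) : ℝ) ^ 2
        ≤ c * (4 * Real.log M) ^ (2 * k + 1) * (β (M - 1) : ℝ) ^ 2 := by gcongr
      _ = Real.log M ^ (2 * k + 1) * (β (M - 1) : ℝ) ^ 2 * (c * 4 ^ (2 * k + 1)) := by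
        rw [mul_pow]; ring
      _ ≤ _ := h3

/-! ### Smoothed counts as Fourier integrals -/

open scoped FourierTransform

/-- Summing a character over all sign choices factors into a product of cosines. -/
lemma sum_signs_exp (N : ℕ) (w : Fin N → ℝ) (θ τ : ℝ) :
    ∑ s : Fin N → ({-1, 1} : Finset ℝ),
      Complex.exp (((θ * (τ - ∑ n, (s n : ℝ) * w n) : ℝ) : ℂ) * Complex.I)
      = 2 ^ N * (Complex.exp (((θ * τ : ℝ) : ℂ) * Complex.I) * ((∏ n, Real.cos (θ * w n) : ℝ) : ℂ)) := by
  have h1 : ∀ s : Fin N → ({-1, 1} : Finset ℝ),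
      Complex.exp (((θ * (τ - ∑ n, (s n : ℝ) * w n) : ℝ) : ℂ) * Complex.I)
      = Complex.exp (((θ * τ : ℝ) : ℂ) * Complex.I) *
        ∏ n, Complex.exp ((((-(s n : ℝ) * (θ * w n)) : ℝ) : ℂ) * Complex.I) := by
    intro s
    rw [← Complex.exp_sum, ← Complex.exp_add, ← Finset.sum_mul, ← add_mul]
    congr 2
    rw [← Complex.ofReal_sum, ← Complex.ofReal_add, mul_sub, Finset.mul_sum, sub_eq_add_neg,
      ← Finset.sum_neg_distrib]
    congr 3
    ext n
    ring
  simp only [h1]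
  rw [← Finset.mul_sum]
  have h2 := (Fintype.prod_sum (fun (n : Fin N) (j : ({-1, 1} : Finset ℝ)) =>
    Complex.exp ((((-(j : ℝ) * (θ * w n)) : ℝ) : ℂ) * Complex.I))).symm
  rw [h2]
  have h3 : ∀ n : Fin N, ∑ j : ({-1, 1} : Finset ℝ),
      Complex.exp ((((-(j : ℝ) * (θ * w n)) : ℝ) : ℂ) * Complex.I) = 2 * ((Real.cos (θ * w n) : ℝ) : ℂ) := by
    intro n
    rw [Finset.sum_coe_sort ({-1, 1} : Finset ℝ)
      (fun j => Complex.exp ((((-j * (θ * w n)) : ℝ) : ℂ) * Complex.I))]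
    rw [Finset.sum_pair (by norm_num), Complex.ofReal_cos, Complex.two_cos]
    congr 2 <;> push_cast <;> ring
  simp only [h3]
  rw [Finset.prod_mul_distrib]
  simp
  ring

/-- The signed sum `∑ n < N, s n / β n`; signs are elements of the finset `{-1, 1}`, as in the
theorem. -/
noncomputable def signSum (β : ℕ → ℕ) (N : ℕ) (s : Fin N → ({-1, 1} : Finset ℝ)) : ℝ :=
  ∑ n : Fin N, (s n : ℝ) / (β n : ℝ)

/-- The characteristic function of the signed sum with independent fair signs, at frequency `v`. -/
noncomputable def phiN (β : ℕ → ℕ) (N : ℕ) (v : ℝ) : ℝ :=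
  ∏ n ∈ Finset.range N, Real.cos (2 * π * v / β n)

lemma continuous_phiN (β : ℕ → ℕ) (N : ℕ) : Continuous (phiN β N) := by
  unfold phiN
  fun_prop

lemma abs_phiN_le_one (β : ℕ → ℕ) (N : ℕ) (v : ℝ) : |phiN β N v| ≤ 1 := by
  unfold phiN
  rw [Finset.abs_prod]
  exact Finset.prod_le_one (fun _ _ => abs_nonneg _) (fun _ _ => Real.abs_cos_le_one _)

lemma phiN_abs (β : ℕ → ℕ) (N : ℕ) (v : ℝ) : phiN β N |v| = phiN β N v := by
  rcases abs_choice v with h | h <;> rw [h]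
  unfold phiN
  refine Finset.prod_congr rfl fun n _ => ?_
  rw [← Real.cos_neg]
  congr 1
  ring

/-- Fourier inversion for a Schwartz function rescaled to width `δ`. -/
lemma schwartz_eq_integral (h : SchwartzMap ℝ ℂ) {δ : ℝ} (hδ : 0 < δ) (y : ℝ) :
    (δ : ℂ)⁻¹ * h (y / δ) =
      ∫ v : ℝ, 𝓕 (h : ℝ → ℂ) (δ * v) * Complex.exp (((2 * π * v * y : ℝ) : ℂ) * Complex.I) := by
  have h1 : h (y / δ) = 𝓕⁻ (𝓕 (h : ℝ → ℂ)) (y / δ) := by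
    rw [Continuous.fourierInv_fourier_eq h.continuous h.integrable]
    rw [← SchwartzMap.fourier_coe]
    exact (𝓕 h).integrable
  rw [h1, Real.fourierInv_eq']
  have h2 := Measure.integral_comp_mul_left (fun u : ℝ =>
    Complex.exp (((2 * π * inner ℝ u (y / δ) : ℝ) : ℂ) * Complex.I) • 𝓕 (h : ℝ → ℂ) u) δ
  rw [abs_of_pos (inv_pos.mpr hδ), Complex.real_smul] at h2
  push_cast at h2 ⊢
  rw [← h2]
  congr 1
  ext v
  rw [smul_eq_mul, mul_comm]
  congr 3
  have hδc : (δ : ℂ) ≠ 0 := by exact_mod_cast hδ.ne'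
  simp
  field_simp

lemma integrable_schwartz_exp (h : SchwartzMap ℝ ℂ) {δ : ℝ} (hδ : 0 < δ) (y : ℝ) :
    Integrable (fun v : ℝ => 𝓕 (h : ℝ → ℂ) (δ * v) *
      Complex.exp (((2 * π * v * y : ℝ) : ℂ) * Complex.I)) := by
  have h1 : Integrable (fun v : ℝ => 𝓕 (h : ℝ → ℂ) (δ * v)) := by
    rw [← SchwartzMap.fourier_coe]
    exact (𝓕 h).integrable.comp_mul_left' hδ.ne'
  refine h1.mul_bdd (c := 1) (by fun_prop) (Eventually.of_forall fun v => ?_)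
  rw [Complex.norm_exp_ofReal_mul_I]

/-- Smoothed counts are integrals against the characteristic function. -/
lemma smoothed_count_eq (h : SchwartzMap ℝ ℂ) (β : ℕ → ℕ) (N : ℕ) {δ : ℝ} (hδ : 0 < δ) (t : ℝ) :
    (2 ^ N : ℂ)⁻¹ * ((δ : ℂ)⁻¹ * ∑ s : Fin N → ({-1, 1} : Finset ℝ), h ((t - signSum β N s) / δ)) =
      ∫ v : ℝ, 𝓕 (h : ℝ → ℂ) (δ * v) *
        (Complex.exp (((2 * π * v * t : ℝ) : ℂ) * Complex.I) * (phiN β N v : ℂ)) := by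
  rw [Finset.mul_sum]
  simp only [schwartz_eq_integral h hδ]
  rw [← integral_finsetSum _ (fun s _ => integrable_schwartz_exp h hδ _), ← integral_const_mul]
  congr 1
  ext v
  rw [← Finset.mul_sum]
  have := sum_signs_exp N (fun n => (1 : ℝ) / β n) (2 * π * v) t
  simp only [mul_one_div] at this
  unfold signSum
  rw [this]
  have h2 : ∏ n : Fin N, Real.cos (2 * π * v / β n) = phiN β N v := by
    unfold phiN
    rw [Finset.prod_range]
  rw [h2]
  have : (2 ^ N : ℂ) ≠ 0 := pow_ne_zero _ two_ne_zero
  field_simp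

/-- The only decay of the Fourier transform needed below: bounded, and `O(|v|⁻⁴)`. -/
lemma schwartz_bounds (h : SchwartzMap ℝ ℂ) : ∃ C : ℝ, 0 < C ∧
    (∀ v, ‖𝓕 (h : ℝ → ℂ) v‖ ≤ C) ∧ (∀ v, |v| ^ 4 * ‖𝓕 (h : ℝ → ℂ) v‖ ≤ C) := by
  rw [← SchwartzMap.fourier_coe]
  obtain ⟨C0, h0, h0'⟩ := (𝓕 h).decay 0 0
  obtain ⟨C1, h1, h1'⟩ := (𝓕 h).decay 4 0
  simp only [norm_iteratedFDeriv_zero, pow_zero, one_mul] at h0' h1'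
  exact ⟨max C0 C1, lt_max_of_lt_left h0, fun v => (h0' v).trans (le_max_left _ _),
    fun v => (h1' v).trans (le_max_right _ _)⟩

/-- Dominated convergence in `smoothed_count_eq`. The integrand is `O(1 / (1 + v²))` uniformly: by
the decay of `phiN` for `|v| ≤ δ⁻²`, and beyond that because `‖𝓕 h (δ v)‖ ≪ (δ v)⁻⁴ ≤ v⁻²`. -/
lemma smoothed_count_tendsto (h : SchwartzMap ℝ ℂ) (β : ℕ → ℕ) (φ : ℝ → ℝ)
    (hφ : ∀ v, Tendsto (fun N => phiN β N v) atTop (nhds (φ v)))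
    {ι : Type*} {l : Filter ι} [l.IsCountablyGenerated] {N : ι → ℕ} {δ t : ι → ℝ} {t0 : ℝ}
    (hN : Tendsto N l atTop) (hδ : Tendsto δ l (nhds 0)) (hδ0 : ∀ᶠ i in l, 0 < δ i)
    (ht : Tendsto t l (nhds t0))
    {v0 : ℝ} (hv0 : 1 / 2 ≤ v0)
    (hdec : ∀ᶠ i in l, ∀ v, v0 ≤ |v| → |v| ≤ ((δ i) ^ 2)⁻¹ → |phiN β (N i) v| ≤ (v ^ 2)⁻¹) :
    Tendsto (fun i => (2 ^ N i : ℂ)⁻¹ * ((δ i : ℂ)⁻¹ *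
        ∑ s : Fin (N i) → ({-1, 1} : Finset ℝ), h ((t i - signSum β (N i) s) / δ i))) l
      (nhds (𝓕 (h : ℝ → ℂ) 0 *
        ∫ v : ℝ, Complex.exp (((2 * π * v * t0 : ℝ) : ℂ) * Complex.I) * (φ v : ℂ))) := by
  obtain ⟨C, hC, hC0, hC4⟩ := schwartz_bounds h
  have hcont : Continuous (𝓕 (h : ℝ → ℂ)) := by
    rw [← SchwartzMap.fourier_coe]; exact (𝓕 h).continuous
  rw [← integral_const_mul]
  have key : Tendsto (fun i => ∫ v : ℝ, 𝓕 (h : ℝ → ℂ) (δ i * v) *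
        (Complex.exp (((2 * π * v * t i : ℝ) : ℂ) * Complex.I) * (phiN β (N i) v : ℂ))) l
      (nhds (∫ v : ℝ, 𝓕 (h : ℝ → ℂ) 0 *
        (Complex.exp (((2 * π * v * t0 : ℝ) : ℂ) * Complex.I) * (φ v : ℂ)))) := by
    set D : ℝ := C * (1 + v0 ^ 2) + 10 * C
    refine MeasureTheory.tendsto_integral_filter_of_dominated_convergence
      (fun v => D * (1 + v ^ 2)⁻¹) ?_ ?_ (integrable_inv_one_add_sq.const_mul D) ?_
    · refine Eventually.of_forall fun i => Continuous.aestronglyMeasurable ?_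
      have := continuous_phiN β (N i)
      fun_prop
    · filter_upwards [hdec, hδ0] with i hi hδi
      refine Eventually.of_forall fun v => ?_
      rw [norm_mul, norm_mul, Complex.norm_exp_ofReal_mul_I, one_mul, Complex.norm_real,
        Real.norm_eq_abs]
      have hp : 0 < 1 + v ^ 2 := by positivity
      rw [← div_eq_mul_inv, le_div_iff₀ hp]
      have hn0 : 0 ≤ ‖𝓕 (h : ℝ → ℂ) (δ i * v)‖ := norm_nonneg _
      have hn1 := hC0 (δ i * v)
      have hφ1 := abs_phiN_le_one β (N i) v
      have hφ0 := abs_nonneg (phiN β (N i) v)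
      have hle : ‖𝓕 (h : ℝ → ℂ) (δ i * v)‖ * |phiN β (N i) v| ≤ C :=
        (mul_le_mul hn1 hφ1 hφ0 hC.le).trans (by simp)
      rcases le_total |v| v0 with hv | hv
      · have : v ^ 2 ≤ v0 ^ 2 := by rw [← sq_abs]; gcongr
        calc ‖𝓕 (h : ℝ → ℂ) (δ i * v)‖ * |phiN β (N i) v| * (1 + v ^ 2) ≤ C * (1 + v0 ^ 2) := by gcongr
          _ ≤ D := by simp only [D]; linarith
      · have hv2 : 1 / 4 ≤ v ^ 2 := by rw [← sq_abs]; nlinarith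
        have hD : 5 * C ≤ D := by simp only [D]; nlinarith [mul_pos hC (show 0 < 1 + v0 ^ 2 by positivity)]
        have hvp : 0 < v ^ 2 := by linarith
        have main : ‖𝓕 (h : ℝ → ℂ) (δ i * v)‖ * |phiN β (N i) v| ≤ C * (v ^ 2)⁻¹ := by
          rcases le_total |v| ((δ i) ^ 2)⁻¹ with hv' | hv'
          · have := hi v hv hv'
            gcongr
          · have h4 := hC4 (δ i * v)
            have hvv : 1 ≤ (δ i) ^ 2 * |v| := by
              rw [inv_le_iff_one_le_mul₀ (by positivity)] at hv'
              linarith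
            have : v ^ 2 ≤ |δ i * v| ^ 4 := by
              rw [abs_mul, abs_of_pos hδi, ← sq_abs v]
              have : (δ i * |v|) ^ 4 = (δ i ^ 2 * |v|) ^ 2 * |v| ^ 2 := by ring
              rw [this]
              exact le_mul_of_one_le_left (by positivity) (one_le_pow₀ hvv)
            rw [← div_eq_mul_inv, le_div_iff₀ hvp]
            calc ‖𝓕 (h : ℝ → ℂ) (δ i * v)‖ * |phiN β (N i) v| * v ^ 2
                ≤ ‖𝓕 (h : ℝ → ℂ) (δ i * v)‖ * 1 * |δ i * v| ^ 4 := by gcongr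
              _ = |δ i * v| ^ 4 * ‖𝓕 (h : ℝ → ℂ) (δ i * v)‖ := by ring
              _ ≤ C := h4
        calc ‖𝓕 (h : ℝ → ℂ) (δ i * v)‖ * |phiN β (N i) v| * (1 + v ^ 2)
            ≤ C * (v ^ 2)⁻¹ * (5 * v ^ 2) := by gcongr; linarith
          _ = 5 * C := by
            have hv_ne : v ≠ 0 := by rintro rfl; norm_num at hvp
            field_simp
          _ ≤ D := hD
    · refine Eventually.of_forall fun v => ?_
      have e1 : Tendsto (fun i => 𝓕 (h : ℝ → ℂ) (δ i * v)) l (nhds (𝓕 (h : ℝ → ℂ) 0)) := by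
        have : Tendsto (fun i => δ i * v) l (nhds 0) := by simpa using hδ.mul_const v
        exact (hcont.tendsto 0).comp this
      have e2 : Tendsto (fun i => (phiN β (N i) v : ℂ)) l (nhds (φ v : ℂ)) :=
        (Complex.continuous_ofReal.tendsto _).comp ((hφ v).comp hN)
      have e3 : Tendsto (fun i => Complex.exp (((2 * π * v * t i : ℝ) : ℂ) * Complex.I)) l
          (nhds (Complex.exp (((2 * π * v * t0 : ℝ) : ℂ) * Complex.I))) := by
        have : Continuous (fun t : ℝ => Complex.exp (((2 * π * v * t : ℝ) : ℂ) * Complex.I)) := by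
          fun_prop
        exact (this.tendsto t0).comp ht
      exact e1.mul (e3.mul e2)
  refine key.congr' ?_
  filter_upwards [hδ0] with i hi
  rw [smoothed_count_eq h β (N i) hi]

/-! ### The limiting density and sharp counts -/

/-- `prod_cos_decay` at `x = 2 |v|`. -/
lemma phiN_decay {k : ℕ} {β : ℕ → ℕ} (hβ : StrictMono β) (hP : ∀ n, PrimeProd k (β n))
    (hgrow : Tendsto (fun M : ℕ => Real.log M ^ (2 * k + 1) * (β (M - 1) : ℝ) ^ 2 / (M : ℝ) ^ 3)
      atTop (nhds 0))
    {ι : Type*} {l : Filter ι} {N : ι → ℕ} {δ : ι → ℝ} (hN : Tendsto N l atTop)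
    (hδ : Tendsto δ l (nhds 0)) (hδ0 : ∀ᶠ i in l, 0 < δ i)
    (hNδ : Tendsto (fun i => Real.log (1 / δ i) ^ (2 * k + 1) * (β (N i - 1) : ℝ) ^ 2 / (N i : ℝ) ^ 3)
      l (nhds 0)) :
    ∃ v0 : ℝ, 1 / 2 ≤ v0 ∧ ∀ᶠ i in l, ∀ v, v0 ≤ |v| → |v| ≤ ((δ i) ^ 2)⁻¹ →
      |phiN β (N i) v| ≤ (v ^ 2)⁻¹ := by
  obtain ⟨x0, hx0, h⟩ := prod_cos_decay hβ hP hgrow hN hδ hδ0 hNδ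
  refine ⟨x0 / 2, by linarith, ?_⟩
  filter_upwards [h] with i hi v hv hv'
  have h1 := hi (2 * |v|) (by linarith) (by linarith)
  have h2 : ∏ n ∈ Finset.range (N i), Real.cos (π * (2 * |v|) / β n) = phiN β (N i) v := by
    rw [← phiN_abs]
    unfold phiN
    refine Finset.prod_congr rfl fun n _ => ?_
    congr 1
    ring
  rw [h2] at h1
  refine h1.trans ?_
  have hv0 : 0 < v ^ 2 := by
    rw [← sq_abs]
    have : 0 < |v| := by linarith
    positivity
  rw [mul_pow, sq_abs]
  gcongr
  linarith

section limit
variable {k : ℕ} {β : ℕ → ℕ} {φ : ℝ → ℝ}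

lemma phi_abs (hφ : ∀ v, Tendsto (fun N => phiN β N v) atTop (nhds (φ v))) (v : ℝ) :
    φ |v| = φ v := by
  refine tendsto_nhds_unique (hφ |v|) ?_
  simp only [phiN_abs]
  exact hφ v

/-- The limiting characteristic function is `O(v⁻²)`, obtained by taking `δ = 1/N`. -/
lemma integrable_phi (hβ : StrictMono β) (hP : ∀ n, PrimeProd k (β n))
    (hgrow : Tendsto (fun M : ℕ => Real.log M ^ (2 * k + 1) * (β (M - 1) : ℝ) ^ 2 / (M : ℝ) ^ 3)
      atTop (nhds 0))
    (hφ : ∀ v, Tendsto (fun N => phiN β N v) atTop (nhds (φ v))) : Integrable φ := by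
  obtain ⟨v0, hv0, h⟩ := phiN_decay hβ hP hgrow (l := atTop) (N := fun n : ℕ => n)
    (δ := fun n : ℕ => 1 / (n : ℝ)) tendsto_id tendsto_one_div_atTop_nhds_zero_nat
    (by filter_upwards [eventually_gt_atTop 0] with n hn; positivity) (by simpa using hgrow)
  have hlarge : ∀ v, v0 ≤ |v| → |φ v| ≤ (v ^ 2)⁻¹ := by
    intro v hv
    refine le_of_tendsto (hφ v).abs ?_
    have hvp : (1 : ℝ) ≤ 2 * |v| := by linarith
    filter_upwards [h, eventually_ge_atTop 1, eventually_ge_atTop ⌈|v|⌉₊] with n hn hn1 hn2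
    refine hn v hv ?_
    have hn3 : |v| ≤ n := (Nat.le_ceil _).trans (by exact_mod_cast hn2)
    have hn1' : (1 : ℝ) ≤ n := by exact_mod_cast hn1
    rw [one_div, inv_pow, inv_inv]
    nlinarith
  have hsmall : ∀ v, |φ v| ≤ 1 := fun v =>
    le_of_tendsto (hφ v).abs (Eventually.of_forall fun n => abs_phiN_le_one β n v)
  have hmeas : AEStronglyMeasurable φ :=
    aestronglyMeasurable_of_tendsto_ae atTop
      (fun n => (continuous_phiN β n).aestronglyMeasurable) (Eventually.of_forall hφ)
  refine (integrable_inv_one_add_sq.const_mul (6 + v0 ^ 2)).mono' hmeas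
    (Eventually.of_forall fun v => ?_)
  rw [Real.norm_eq_abs, ← div_eq_mul_inv, le_div_iff₀ (by positivity)]
  rcases le_total |v| v0 with hv | hv
  · have : v ^ 2 ≤ v0 ^ 2 := by rw [← sq_abs]; gcongr
    calc |φ v| * (1 + v ^ 2) ≤ 1 * (1 + v0 ^ 2) := by gcongr; exact hsmall v
      _ ≤ _ := by linarith
  · have hv2 : 1 / 4 ≤ v ^ 2 := by rw [← sq_abs]; nlinarith
    have hv_ne : v ≠ 0 := by rintro rfl; norm_num at hv2
    calc |φ v| * (1 + v ^ 2) ≤ (v ^ 2)⁻¹ * (5 * v ^ 2) := by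
          gcongr
          · exact hlarge v hv
          · linarith
      _ = 5 := by field_simp
      _ ≤ _ := by nlinarith

/-- The density at `t` of a real random variable with even real characteristic function
`v ↦ φ v` (frequency normalised by `2π`), as a half-line cosine integral. -/
noncomputable def density (φ : ℝ → ℝ) (t : ℝ) : ℝ :=
  2 * ∫ u in Set.Ioi (0 : ℝ), Real.cos (2 * π * u * t) * φ u

lemma re_integral_eq_density (hi : Integrable φ) (hev : ∀ v, φ |v| = φ v) (t : ℝ) :
    (∫ v : ℝ, Complex.exp (((2 * π * v * t : ℝ) : ℂ) * Complex.I) * (φ v : ℂ)).re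
      = density φ t := by
  have hIntg : Integrable (fun v : ℝ =>
      Complex.exp (((2 * π * v * t : ℝ) : ℂ) * Complex.I) * (φ v : ℂ)) := by
    refine hi.ofReal.bdd_mul (c := 1) (by fun_prop) (Eventually.of_forall fun v => ?_)
    rw [Complex.norm_exp_ofReal_mul_I]
  have h1 := integral_re hIntg
  simp only [RCLike.re_to_complex] at h1
  rw [← h1]
  have h2 : ∀ v : ℝ, (Complex.exp (((2 * π * v * t : ℝ) : ℂ) * Complex.I) * (φ v : ℂ)).re
      = (fun u => Real.cos (2 * π * u * t) * φ u) |v| := by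
    intro v
    rw [Complex.re_mul_ofReal, Complex.exp_ofReal_mul_I_re]
    simp only [hev]
    congr 1
    rcases abs_choice v with h | h <;> rw [h]
    rw [← Real.cos_neg]
    congr 1
    ring
  simp only [h2]
  exact integral_comp_abs (f := fun u => Real.cos (2 * π * u * t) * φ u)

/-- Asymptotics of the counts weighted by a smooth bump of width proportional to `δ`. -/
lemma bump_count_tendsto (hβ : StrictMono β) (hP : ∀ n, PrimeProd k (β n))
    (hgrow : Tendsto (fun M : ℕ => Real.log M ^ (2 * k + 1) * (β (M - 1) : ℝ) ^ 2 / (M : ℝ) ^ 3)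
      atTop (nhds 0))
    (hφ : ∀ v, Tendsto (fun N => phiN β N v) atTop (nhds (φ v)))
    {ι : Type*} {l : Filter ι} [l.IsCountablyGenerated] {N : ι → ℕ} {δ t : ι → ℝ} {t0 : ℝ}
    (hN : Tendsto N l atTop)
    (hδ : Tendsto δ l (nhds 0)) (hδ0 : ∀ᶠ i in l, 0 < δ i) (ht : Tendsto t l (nhds t0))
    (hNδ : Tendsto (fun i => Real.log (1 / δ i) ^ (2 * k + 1) * (β (N i - 1) : ℝ) ^ 2 / (N i : ℝ) ^ 3)
      l (nhds 0)) (f : ContDiffBump (0 : ℝ)) :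
    Tendsto (fun i => (∑ s : Fin (N i) → ({-1, 1} : Finset ℝ), f ((t i - signSum β (N i) s) / δ i))
      / (2 ^ N i * δ i)) l (nhds ((∫ x, f x) * density φ t0)) := by
  obtain ⟨v0, hv0, hdec⟩ := phiN_decay hβ hP hgrow hN hδ hδ0 hNδ
  have hcs : HasCompactSupport (fun x : ℝ => ((f x : ℝ) : ℂ)) :=
    f.hasCompactSupport.comp_left (g := fun x : ℝ => (x : ℂ)) Complex.ofReal_zero
  have hcd : ContDiff ℝ (⊤ : ℕ∞) (fun x : ℝ => ((f x : ℝ) : ℂ)) :=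
    Complex.ofRealCLM.contDiff.comp f.contDiff
  let h : SchwartzMap ℝ ℂ := hcs.toSchwartzMap hcd
  have hh : ∀ x, h x = ((f x : ℝ) : ℂ) := fun x => rfl
  have key := smoothed_count_tendsto h β φ hφ hN hδ hδ0 ht hv0 hdec
  have hF : 𝓕 (h : ℝ → ℂ) 0 = ((∫ x, f x : ℝ) : ℂ) := by
    rw [Real.fourier_eq']
    simp only [inner_zero_right, hh]
    simp [integral_complex_ofReal]
  rw [hF] at key
  have key2 := (Complex.continuous_re.tendsto _).comp key
  rw [Complex.re_ofReal_mul, re_integral_eq_density (integrable_phi hβ hP hgrow hφ) (phi_abs hφ)] at key2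
  refine key2.congr fun i => ?_
  simp only [Function.comp_apply, hh]
  have : ((2 : ℂ) ^ N i)⁻¹ * ((δ i : ℂ)⁻¹ *
      ∑ s : Fin (N i) → ({-1, 1} : Finset ℝ), ((f ((t i - signSum β (N i) s) / δ i) : ℝ) : ℂ)) =
      ((((2 : ℝ) ^ N i)⁻¹ * ((δ i)⁻¹ *
      ∑ s : Fin (N i) → ({-1, 1} : Finset ℝ), f ((t i - signSum β (N i) s) / δ i)) : ℝ) : ℂ) := by
    push_cast
    rfl
  rw [this, Complex.ofReal_re, div_eq_mul_inv, mul_inv]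
  ring

/-- Asymptotics of the sharp count, by squeezing the indicator of `(-1, 1)` between bumps whose
integrals are close to `2`. -/
lemma count_tendsto (hβ : StrictMono β) (hP : ∀ n, PrimeProd k (β n))
    (hgrow : Tendsto (fun M : ℕ => Real.log M ^ (2 * k + 1) * (β (M - 1) : ℝ) ^ 2 / (M : ℝ) ^ 3)
      atTop (nhds 0))
    (hφ : ∀ v, Tendsto (fun N => phiN β N v) atTop (nhds (φ v)))
    {ι : Type*} {l : Filter ι} [l.IsCountablyGenerated] {N : ι → ℕ} {δ t : ι → ℝ} {t0 : ℝ}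
    (hN : Tendsto N l atTop)
    (hδ : Tendsto δ l (nhds 0)) (hδ0 : ∀ᶠ i in l, 0 < δ i) (ht : Tendsto t l (nhds t0))
    (hNδ : Tendsto (fun i => Real.log (1 / δ i) ^ (2 * k + 1) * (β (N i - 1) : ℝ) ^ 2 / (N i : ℝ) ^ 3)
      l (nhds 0)) :
    Tendsto (fun i => (Nat.card {s : Fin (N i) → ({-1, 1} : Finset ℝ) //
        |t i - signSum β (N i) s| < δ i} : ℝ) / (2 ^ N i * δ i)) l (nhds (2 * density φ t0)) := by
  classical
  have hbump := bump_count_tendsto hβ hP hgrow hφ hN hδ hδ0 ht hNδ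
  have hcard : ∀ i, (Nat.card {s : Fin (N i) → ({-1, 1} : Finset ℝ) //
        |t i - signSum β (N i) s| < δ i} : ℝ) =
      ∑ s : Fin (N i) → ({-1, 1} : Finset ℝ), if |t i - signSum β (N i) s| < δ i then (1 : ℝ) else 0 := by
    intro i
    rw [Nat.card_eq_fintype_card, Fintype.card_subtype, Finset.card_filter]
    push_cast
    rfl
  -- A bump supported in `[-1, 1]` is a minorant of the indicator.
  have hlow : ∀ f : ContDiffBump (0 : ℝ), f.rOut ≤ 1 → ∀ᶠ i in l,
      (∑ s : Fin (N i) → ({-1, 1} : Finset ℝ), f ((t i - signSum β (N i) s) / δ i))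
      / (2 ^ N i * δ i) ≤ (Nat.card {s : Fin (N i) → ({-1, 1} : Finset ℝ) //
        |t i - signSum β (N i) s| < δ i} : ℝ) / (2 ^ N i * δ i) := by
    intro f hf
    filter_upwards [hδ0] with i hi
    rw [hcard]
    gcongr with s
    split_ifs with hs
    · exact f.le_one
    · refine (f.zero_of_le_dist ?_).le
      rw [Real.dist_eq, sub_zero, abs_div, abs_of_pos hi, le_div_iff₀ hi]
      rw [not_lt] at hs
      nlinarith
  -- A bump equal to `1` on `[-1, 1]` is a majorant of the indicator.
  have hupp : ∀ f : ContDiffBump (0 : ℝ), 1 ≤ f.rIn → ∀ᶠ i in l,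
      (Nat.card {s : Fin (N i) → ({-1, 1} : Finset ℝ) //
        |t i - signSum β (N i) s| < δ i} : ℝ) / (2 ^ N i * δ i) ≤
      (∑ s : Fin (N i) → ({-1, 1} : Finset ℝ), f ((t i - signSum β (N i) s) / δ i))
      / (2 ^ N i * δ i) := by
    intro f hf
    filter_upwards [hδ0] with i hi
    rw [hcard]
    gcongr with s
    split_ifs with hs
    · refine (f.one_of_mem_closedBall ?_).ge
      rw [mem_closedBall_zero_iff, Real.norm_eq_abs, abs_div, abs_of_pos hi, div_le_iff₀ hi]
      nlinarith
    · exact f.nonneg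
  have hIntg : ∀ f : ContDiffBump (0 : ℝ), 2 * f.rIn ≤ ∫ x, f x ∧ ∫ x, f x ≤ 2 * f.rOut := by
    intro f
    have h1 := f.measure_closedBall_le_integral (μ := volume)
    have h2 := f.integral_le_measure_closedBall (μ := volume)
    rw [Measure.real, Real.volume_closedBall, ENNReal.toReal_ofReal (by linarith [f.rIn_pos])] at h1
    rw [Measure.real, Real.volume_closedBall, ENNReal.toReal_ofReal (by linarith [f.rOut_pos])] at h2
    exact ⟨h1, h2⟩
  set G := density φ t0
  rw [tendsto_order]
  have hsmall : ∀ η > 0, ∃ ζ : ℝ, 0 < ζ ∧ ζ < 1 ∧ 2 * ζ * |G| < η := by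
    intro η hη
    refine ⟨min (1 / 2) (η / (4 * (|G| + 1))), by positivity, by
      exact (min_le_left _ _).trans_lt (by norm_num), ?_⟩
    have hG := abs_nonneg G
    calc 2 * min (1 / 2) (η / (4 * (|G| + 1))) * |G| ≤ 2 * (η / (4 * (|G| + 1))) * (|G| + 1) := by
          gcongr
          · exact min_le_right _ _
          · linarith
      _ = η / 2 := by field_simp; norm_num
      _ < η := by linarith
  have hdiff : ∀ f : ContDiffBump (0 : ℝ), ∀ ζ, 1 - ζ ≤ f.rIn → f.rOut ≤ 1 + ζ →
      |(∫ x, f x) * G - 2 * G| ≤ 2 * ζ * |G| := by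
    intro f ζ h1 h2
    rw [← sub_mul, abs_mul]
    gcongr
    have := hIntg f
    rw [abs_le]
    constructor <;> linarith
  constructor
  · intro a ha
    obtain ⟨ζ, h0, h1, h2⟩ := hsmall (2 * G - a) (by linarith)
    let f : ContDiffBump (0 : ℝ) := ⟨1 - ζ, 1, by linarith, by linarith⟩
    have hd := hdiff f ζ le_rfl (show (1 : ℝ) ≤ 1 + ζ by linarith)
    rw [abs_le] at hd
    filter_upwards [(tendsto_order.mp (hbump f)).1 a (by linarith), hlow f le_rfl] with i hi hi'
    exact hi.trans_le hi'
  · intro a ha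
    obtain ⟨ζ, h0, h1, h2⟩ := hsmall (a - 2 * G) (by linarith)
    let f : ContDiffBump (0 : ℝ) := ⟨1, 1 + ζ, by linarith, by linarith⟩
    have hd := hdiff f ζ (show 1 - ζ ≤ (1 : ℝ) by linarith) le_rfl
    rw [abs_le] at hd
    filter_upwards [(tendsto_order.mp (hbump f)).2 a (by linarith), hupp f le_rfl] with i hi hi'
    exact hi'.trans_lt hi

end limit

/-! ### The density does not vanish identically -/

section nonvanish
variable {k : ℕ} {β : ℕ → ℕ} {φ : ℝ → ℝ}

lemma one_sub_prod_le (N : ℕ) (c : ℕ → ℝ) (hc : ∀ n, |c n| ≤ 1) :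
    |1 - ∏ n ∈ Finset.range N, c n| ≤ ∑ n ∈ Finset.range N, |1 - c n| := by
  induction N with
  | zero => simp
  | succ N ih =>
    rw [Finset.prod_range_succ, Finset.sum_range_succ]
    have h1 : 1 - (∏ n ∈ Finset.range N, c n) * c N =
      (1 - ∏ n ∈ Finset.range N, c n) * c N + (1 - c N) := by ring
    rw [h1]
    refine (abs_add_le _ _).trans (add_le_add_left ?_ _)
    rw [abs_mul]
    exact (mul_le_of_le_one_right (abs_nonneg _) (hc N)).trans ih

lemma strictMono_ge (hβ : StrictMono β) (h0 : 0 < β 0) (n : ℕ) : (n : ℝ) + 1 ≤ β n := by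
  have h : n + 1 ≤ β n := by
    induction n with
    | zero => exact h0
    | succ n ih => exact ih.trans_lt (hβ (Nat.lt_succ_self n))
  exact_mod_cast h

lemma abs_one_sub_cos_le (x : ℝ) : |1 - Real.cos x| ≤ x ^ 2 / 2 := by
  rw [abs_of_nonneg (by linarith [Real.cos_le_one x])]
  linarith [Real.one_sub_sq_div_two_le_cos (x := x)]

lemma abs_one_sub_cos_div_le (hβ : StrictMono β) (h0 : 0 < β 0) (v : ℝ) (n : ℕ) :
    |1 - Real.cos (2 * π * v / β n)| ≤ 2 * π ^ 2 * v ^ 2 * (1 / ((n : ℝ) + 1) ^ 2) := by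
  refine (abs_one_sub_cos_le _).trans ?_
  have h := strictMono_ge hβ h0 n
  rw [div_pow]
  calc (2 * π * v) ^ 2 / (β n : ℝ) ^ 2 / 2 ≤ (2 * π * v) ^ 2 / ((n : ℝ) + 1) ^ 2 / 2 := by gcongr
    _ = _ := by field_simp

lemma summable_one_div_succ_sq : Summable (fun n : ℕ => 1 / ((n : ℝ) + 1) ^ 2) := by
  have := (summable_nat_add_iff 1).mpr (Real.summable_one_div_nat_pow.mpr (one_lt_two))
  simpa using this

/-- The infinite cosine products converge, since `1 - cos (c / β n) = O(1 / n²)`. -/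
lemma exists_phi (hβ : StrictMono β) (h0 : 0 < β 0) :
    ∃ φ : ℝ → ℝ, ∀ v, Tendsto (fun N => phiN β N v) atTop (nhds (φ v)) := by
  have : ∀ v, ∃ L, Tendsto (fun N => phiN β N v) atTop (nhds L) := by
    intro v
    have hs : Summable (fun n => Real.cos (2 * π * v / β n) - 1) := by
      refine Summable.of_norm_bounded
        (summable_one_div_succ_sq.mul_left (2 * π ^ 2 * v ^ 2)) fun n => ?_
      rw [Real.norm_eq_abs, abs_sub_comm]
      exact abs_one_sub_cos_div_le hβ h0 v n
    have hm := Real.multipliable_one_add_of_summable hs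
    refine ⟨_, (hm.hasProd.tendsto_prod_nat).congr fun N => ?_⟩
    unfold phiN
    refine Finset.prod_congr rfl fun n _ => by ring
  choose φ hφ using this
  exact ⟨φ, hφ⟩

/-- In particular `φ 0 = 1` and `φ` is continuous at `0`. -/
lemma phi_near_one (hβ : StrictMono β) (h0 : 0 < β 0)
    (hφ : ∀ v, Tendsto (fun N => phiN β N v) atTop (nhds (φ v))) :
    ∃ C, ∀ v, |1 - φ v| ≤ C * v ^ 2 := by
  refine ⟨2 * π ^ 2 * ∑' n : ℕ, 1 / ((n : ℝ) + 1) ^ 2, fun v => ?_⟩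
  refine le_of_tendsto ((hφ v).const_sub 1).abs (Eventually.of_forall fun N => ?_)
  refine (one_sub_prod_le N _ fun n => Real.abs_cos_le_one _).trans ?_
  calc ∑ n ∈ Finset.range N, |1 - Real.cos (2 * π * v / β n)|
      ≤ ∑ n ∈ Finset.range N, 2 * π ^ 2 * v ^ 2 * (1 / ((n : ℝ) + 1) ^ 2) :=
        Finset.sum_le_sum fun n _ => abs_one_sub_cos_div_le hβ h0 v n
    _ = 2 * π ^ 2 * v ^ 2 * ∑ n ∈ Finset.range N, (1 / ((n : ℝ) + 1) ^ 2) := by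
        rw [Finset.mul_sum]
    _ ≤ 2 * π ^ 2 * v ^ 2 * ∑' n : ℕ, (1 / ((n : ℝ) + 1) ^ 2) := by
        gcongr
        exact summable_one_div_succ_sq.sum_le_tsum _ fun n _ => by positivity
    _ = _ := by ring

/-- The density is not identically zero: otherwise the Fourier transform of `φ` vanishes, and
inversion at `0` contradicts `φ 0 = 1`. -/
lemma exists_density_ne_zero (hβ : StrictMono β) (h0 : 0 < β 0) (hi : Integrable φ)
    (hφ : ∀ v, Tendsto (fun N => phiN β N v) atTop (nhds (φ v))) :
    ∃ t, density φ t ≠ 0 := by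
  by_contra! hcon
  obtain ⟨C, hC⟩ := phi_near_one hβ h0 hφ
  have hφ0 : φ 0 = 1 := by
    have := hC 0
    simp only [ne_eq, OfNat.ofNat_ne_zero, not_false_eq_true, zero_pow, mul_zero] at this
    linarith [abs_nonpos_iff.mp this]
  have hcont : ContinuousAt φ 0 := by
    rw [ContinuousAt, hφ0]
    have h1 : Tendsto (fun v : ℝ => C * v ^ 2) (nhds 0) (nhds 0) := by
      have : Continuous (fun v : ℝ => C * v ^ 2) := by fun_prop
      simpa using this.tendsto 0
    have h2 : Tendsto (fun v => 1 - φ v) (nhds 0) (nhds 0) :=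
      squeeze_zero_norm (fun v => hC v) h1
    simpa using h2.const_sub 1
  have hF : 𝓕 (fun v => (φ v : ℂ)) = 0 := by
    ext t
    have hIntg : Integrable (fun v : ℝ =>
        Complex.exp (((2 * π * v * (-t) : ℝ) : ℂ) * Complex.I) * (φ v : ℂ)) := by
      refine hi.ofReal.bdd_mul (c := 1) (by fun_prop) (Eventually.of_forall fun v => ?_)
      rw [Complex.norm_exp_ofReal_mul_I]
    have hev := phi_abs hφ
    have hre := re_integral_eq_density hi hev (-t)
    rw [hcon] at hre
    -- The imaginary part is the integral of an odd function.
    have him : (∫ v : ℝ, Complex.exp (((2 * π * v * (-t) : ℝ) : ℂ) * Complex.I) * (φ v : ℂ)).im = 0 := by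
      have h1 := integral_im hIntg
      simp only [RCLike.im_to_complex] at h1
      rw [← h1]
      set F := fun v : ℝ => (Complex.exp (((2 * π * v * (-t) : ℝ) : ℂ) * Complex.I) * (φ v : ℂ)).im
        with hFdef
      have hodd : ∀ v, F (-v) = - F v := by
        intro v
        simp only [hFdef]
        rw [Complex.im_mul_ofReal, Complex.im_mul_ofReal, Complex.exp_ofReal_mul_I_im,
          Complex.exp_ofReal_mul_I_im, ← hev (-v), abs_neg, hev, ← neg_mul, ← Real.sin_neg]
        congr 2
        ring
      have h3 := integral_neg_eq_self F volume
      simp only [hodd] at h3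
      rw [integral_neg] at h3
      linarith
    rw [Real.fourier_eq']
    simp only [Pi.zero_apply]
    have heq : ∀ v : ℝ, Complex.exp (((-2 * π * inner ℝ v t : ℝ) : ℂ) * Complex.I) • (φ v : ℂ)
        = Complex.exp (((2 * π * v * (-t) : ℝ) : ℂ) * Complex.I) * (φ v : ℂ) := by
      intro v
      rw [smul_eq_mul]
      congr 4
      simp
      ring
    simp only [heq]
    exact Complex.ext hre him
  have hinv := MeasureTheory.Integrable.fourierInv_fourier_eq (f := fun v => (φ v : ℂ)) hi.ofReal
    (by rw [hF]; exact integrable_zero _ _ _) (v := 0)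
    (Complex.continuous_ofReal.continuousAt.comp hcont)
  rw [hF, Real.fourierInv_eq'] at hinv
  simp [hφ0] at hinv

end nonvanish

/-! ### Approximating every target -/

lemma sum_range_parity (F : ℕ → ℝ) (N : ℕ) :
    ∑ n ∈ Finset.range N, F n = ∑ j ∈ Finset.range ((N + 1) / 2), F (2 * j)
      + ∑ j ∈ Finset.range (N / 2), F (2 * j + 1) := by
  induction N with
  | zero => simp
  | succ N ih =>
    rw [Finset.sum_range_succ, ih]
    rcases Nat.even_or_odd' N with ⟨m, rfl | rfl⟩
    · have h1 : (2 * m + 1) / 2 = m := by omega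
      have h2 : (2 * m + 1 + 1) / 2 = m + 1 := by omega
      have h3 : 2 * m / 2 = m := by omega
      rw [h1, h2, h3, Finset.sum_range_succ]
      ring
    · have h1 : (2 * m + 1) / 2 = m := by omega
      have h2 : (2 * m + 1 + 1) / 2 = m + 1 := by omega
      have h3 : (2 * m + 1 + 1 + 1) / 2 = m + 1 := by omega
      rw [h1, h2, h3, Finset.sum_range_succ (fun j => F (2 * j + 1)) m]
      ring

/-- Splitting off the even-indexed terms of a divergent decreasing series leaves a divergent one. -/
lemma odd_not_summable {b : ℕ → ℕ} (hb : StrictMono b) (h0 : 0 < b 0)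
    (hs : ¬ Summable (fun n => (1 : ℝ) / b n)) : ¬ Summable (fun j => (1 : ℝ) / b (2 * j + 1)) := by
  intro h
  apply hs
  rw [← summable_nat_add_iff 1]
  have h2 : Summable (fun j => (1 : ℝ) / b (2 * j + 1 + 1)) := by
    refine Summable.of_nonneg_of_le (fun j => by positivity) (fun j => ?_) h
    have hp : (0 : ℝ) < b (2 * j + 1) := by
      exact_mod_cast h0.trans (hb (by omega))
    have : (b (2 * j + 1) : ℝ) ≤ b (2 * j + 1 + 1) := by
      exact_mod_cast (hb (Nat.lt_succ_self _)).le
    exact one_div_le_one_div_of_le hp this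
  exact (h.hasSum.even_add_odd (f := fun n => (1 : ℝ) / b (n + 1)) h2.hasSum).summable

/-- Signed sums over the first `N` terms come within `δ N` of `τ`, with no positivity assumption on
the density at `τ`: the odd-indexed signs steer the remaining target to a point where the density of
the even-indexed series does not vanish, and the count for the even-indexed part is then nonzero. -/
lemma exists_signs_near {k : ℕ} {b : ℕ → ℕ} (hb : StrictMono b) (hP : ∀ n, PrimeProd k (b n))
    {C : ℝ} (hC : 0 < C) (hgr : ∀ᶠ n : ℕ in atTop, (b n : ℝ) ≤ C * ((n : ℝ) + 1) ^ ((5 : ℝ) / 4))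
    (hs : ¬ Summable (fun n => (1 : ℝ) / b n))
    {l : Filter ℕ} [l.IsCountablyGenerated] (hl : l ≤ atTop) {δ : ℕ → ℝ}
    (hδ : Tendsto δ l (nhds 0)) (hδ0 : ∀ᶠ i in l, 0 < δ i)
    (hNδ : Tendsto (fun N : ℕ => Real.log (1 / δ N) ^ (2 * k + 1) * (b (N - 1) : ℝ) ^ 2 / (N : ℝ) ^ 3)
      l (nhds 0)) (τ : ℝ) :
    ∀ᶠ N in l, ∃ s : ℕ → ℝ, (∀ n, s n = 1 ∨ s n = -1) ∧
      |(∑ n ∈ Finset.range N, s n / (b n : ℝ)) - τ| < δ N := by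
  have hpos : ∀ n, 0 < b n := fun n => Nat.pos_of_ne_zero (hP n).1.ne_zero
  set β : ℕ → ℕ := fun j => b (2 * j) with hβdef
  have hβ : StrictMono β := fun i j hij => hb (by omega)
  have hβP : ∀ n, PrimeProd k (β n) := fun n => hP _
  have hβgr : ∀ᶠ n : ℕ in atTop, (β n : ℝ) ≤ (C * 2 ^ ((5 : ℝ) / 4)) * ((n : ℝ) + 1) ^ ((5 : ℝ) / 4) := by
    have h2 : Tendsto (fun n : ℕ => 2 * n) atTop atTop :=
      tendsto_atTop_mono (fun n => by simp only [id]; omega) tendsto_id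
    filter_upwards [h2.eventually hgr] with n hn
    refine hn.trans ?_
    rw [mul_assoc, ← Real.mul_rpow (by norm_num) (by positivity)]
    push_cast
    gcongr
    linarith
  have hgrow := tendsto_density k β _ hβgr
  obtain ⟨φ, hφ⟩ := exists_phi hβ (hpos _)
  obtain ⟨t0, ht0⟩ := exists_density_ne_zero hβ (hpos _) (integrable_phi hβ hβP hgrow hφ) hφ
  obtain ⟨sB, hsB, hsBlim⟩ := exists_signs_tendsto (fun j => (1 : ℝ) / b (2 * j + 1))
    (fun n => by have := hpos (2 * n + 1); positivity)
    (by
      have h1 : Tendsto (fun j : ℕ => b (2 * j + 1)) atTop atTop :=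
        hb.tendsto_atTop.comp (tendsto_atTop_mono (fun n => by simp only [id]; omega) tendsto_id)
      simp only [one_div]
      exact tendsto_inv_atTop_zero.comp (tendsto_natCast_atTop_atTop.comp h1))
    (odd_not_summable hb (hpos 0) hs) (τ - t0)
  have hid : Tendsto (fun N : ℕ => N) l atTop := hl
  have hNA : Tendsto (fun N : ℕ => (N + 1) / 2) l atTop := by
    refine (tendsto_atTop.mpr fun m => ?_).mono_left hl
    filter_upwards [eventually_ge_atTop (2 * m)] with N hN
    omega
  have hNB : Tendsto (fun N : ℕ => N / 2) l atTop := by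
    refine (tendsto_atTop.mpr fun m => ?_).mono_left hl
    filter_upwards [eventually_ge_atTop (2 * m)] with N hN
    omega
  have ht : Tendsto (fun N : ℕ => τ - ∑ n ∈ Finset.range (N / 2), sB n * ((1 : ℝ) / b (2 * n + 1))) l
      (nhds t0) := by
    have := (hsBlim.comp hNB).const_sub τ
    simpa using this
  have hNδA : Tendsto (fun N : ℕ => Real.log (1 / δ N) ^ (2 * k + 1) *
      (β ((N + 1) / 2 - 1) : ℝ) ^ 2 / (((N + 1) / 2 : ℕ) : ℝ) ^ 3) l (nhds 0) := by
    have h8 := hNδ.const_mul 8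
    rw [mul_zero] at h8
    refine tendsto_of_tendsto_of_tendsto_of_le_of_le' tendsto_const_nhds h8 ?_ ?_
    · filter_upwards [hδ0, hδ.eventually_le_const one_pos] with N h0 h1
      have : 0 ≤ Real.log (1 / δ N) := Real.log_nonneg ((one_le_div h0).mpr h1)
      positivity
    · filter_upwards [hδ0, hδ.eventually_le_const one_pos, hid.eventually_ge_atTop 1] with N h0 h1 hN
      have hlog : 0 ≤ Real.log (1 / δ N) := Real.log_nonneg ((one_le_div h0).mpr h1)
      have hb1 : (β ((N + 1) / 2 - 1) : ℝ) ≤ b (N - 1) := by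
        exact_mod_cast hb.monotone (by omega)
      have hN1 : (0 : ℝ) < N := by exact_mod_cast hN
      have hN2 : (N : ℝ) / 2 ≤ (((N + 1) / 2 : ℕ) : ℝ) := by
        rw [div_le_iff₀ (by norm_num)]
        have : N ≤ (N + 1) / 2 * 2 := by omega
        exact_mod_cast this
      calc _ ≤ Real.log (1 / δ N) ^ (2 * k + 1) * (b (N - 1) : ℝ) ^ 2 / ((N : ℝ) / 2) ^ 3 := by
            gcongr
        _ = _ := by field_simp; norm_num
  have hcount := count_tendsto hβ hβP hgrow hφ hNA hδ hδ0 ht hNδA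
  have hne : 2 * density φ t0 ≠ 0 := by simpa using ht0
  filter_upwards [hcount.eventually_ne hne] with N hN
  have hcne : Nat.card {s : Fin ((N + 1) / 2) → ({-1, 1} : Finset ℝ) //
      |(τ - ∑ n ∈ Finset.range (N / 2), sB n * ((1 : ℝ) / b (2 * n + 1))) -
        signSum β ((N + 1) / 2) s| < δ N} ≠ 0 := by
    intro h
    rw [h] at hN
    simp at hN
  obtain ⟨⟨sA, hsA⟩⟩ := (Nat.card_ne_zero.mp hcne).1
  have hsA1 : ∀ j, (sA j : ℝ) = 1 ∨ (sA j : ℝ) = -1 := by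
    intro j
    have := (sA j).2
    simp only [Finset.mem_insert, Finset.mem_singleton] at this
    exact this.symm
  refine ⟨fun n => if n % 2 = 0 then
    (if h : n / 2 < (N + 1) / 2 then (sA ⟨n / 2, h⟩ : ℝ) else 1) else sB (n / 2), ?_, ?_⟩
  · intro n
    dsimp only
    split_ifs
    · exact hsA1 _
    · exact Or.inl rfl
    · exact hsB _
  · rw [sum_range_parity]
    have e1 : ∑ j ∈ Finset.range ((N + 1) / 2), (if (2 * j) % 2 = 0 then
        (if h : (2 * j) / 2 < (N + 1) / 2 then (sA ⟨(2 * j) / 2, h⟩ : ℝ) else 1)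
          else sB ((2 * j) / 2)) / (b (2 * j) : ℝ) = signSum β ((N + 1) / 2) sA := by
      unfold signSum
      rw [Finset.sum_range]
      refine Finset.sum_congr rfl fun j _ => ?_
      have hj : 2 * (j : ℕ) / 2 = j := by omega
      simp [hj, hβdef]
    have e2 : ∑ j ∈ Finset.range (N / 2), (if (2 * j + 1) % 2 = 0 then
        (if h : (2 * j + 1) / 2 < (N + 1) / 2 then (sA ⟨(2 * j + 1) / 2, h⟩ : ℝ) else 1)
          else sB ((2 * j + 1) / 2)) / (b (2 * j + 1) : ℝ) =
        ∑ n ∈ Finset.range (N / 2), sB n * ((1 : ℝ) / b (2 * n + 1)) := by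
      refine Finset.sum_congr rfl fun j _ => ?_
      have hj : (2 * j + 1) / 2 = j := by omega
      have hj2 : ¬ ((2 * j + 1) % 2 = 0) := by omega
      rw [if_neg hj2, hj, mul_one_div]
    rw [e1, e2, abs_sub_comm]
    convert hsA using 2
    ring

/-! ### The counting theorem -/

/-- **Corollary (counting sign choices, products of `k` distinct primes).**
Fix `k ≥ 1`, let `b n` be the `n`-th element (in increasing order, `n ≥ 1`) of
the set of positive integers that are products of exactly `k` distinct primes,
`B_k(n) = b n / n`, and let `f : ℕ → ℝ` satisfy `(log N)/f(N) → 0` and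
`f(N)/(N/B_k(N)²)^{1/(2k+1)} → 0`. With `ϱ(x) = ∏_{n=1}^∞ cos (π x / b n)` and
`g(x) = 2 ∫_0^∞ cos (2πux) ϱ(2u) du`, for every `τ ∈ ℝ` and `ε > 0` there is
`N₀ ≥ 1` with: for all `N ≥ N₀` and `exp(−f N) ≤ δ ≤ 1/N₀`,
`|#{s ∈ {−1,1}^N : |τ − ∑ s n / b n| < δ} − 2^{N+1} g(τ) δ| ≤ ε 2^{N+1} δ`;
in particular `𝔪_N(τ) < exp (−f N)` for all `N ≥ N₀`. -/
theorem counting_sign_choices_k_primes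
    (k : ℕ) (hk : 1 ≤ k)
    (b : ℕ → ℕ)
    (hb : ∀ n : ℕ, 1 ≤ n →
      b n = Nat.nth (fun m => Squarefree m ∧ m.primeFactors.card = k) (n - 1))
    (Bk : ℕ → ℝ) (hBk : ∀ n : ℕ, 1 ≤ n → Bk n = (b n : ℝ) / n)
    (f : ℕ → ℝ)
    (hf1 : Tendsto (fun N : ℕ => Real.log N / f N) atTop (nhds 0))
    (hf2 : Tendsto
      (fun N : ℕ => f N / (((N : ℝ) / Bk N ^ 2) ^ ((1 : ℝ) / (2 * (k : ℝ) + 1))))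
      atTop (nhds 0))
    (ϱ : ℝ → ℝ)
    (hϱ : ∀ x : ℝ,
      Tendsto (fun N : ℕ => ∏ n ∈ Finset.Icc 1 N, Real.cos (π * x / (b n : ℝ)))
        atTop (nhds (ϱ x)))
    (g : ℝ → ℝ)
    (hg : ∀ x : ℝ,
      g x = 2 * ∫ u in Set.Ioi (0 : ℝ), Real.cos (2 * π * u * x) * ϱ (2 * u)) :
    ∀ τ : ℝ, ∀ ε : ℝ, 0 < ε → ∃ N₀ : ℕ, 0 < N₀ ∧
      (∀ N : ℕ, N₀ ≤ N → ∀ δ : ℝ, Real.exp (-f N) ≤ δ → δ ≤ 1 / (N₀ : ℝ) →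
        |(Nat.card {s : Fin N → ({-1, 1} : Finset ℝ) //
              |τ - ∑ n : Fin N, (s n : ℝ) / (b ((n : ℕ) + 1) : ℝ)| < δ} : ℝ) -
            2 ^ (N + 1) * g τ * δ| ≤ ε * 2 ^ (N + 1) * δ) ∧
      (∀ N : ℕ, N₀ ≤ N → ∃ s : ℕ → ℝ, (∀ n, s n = 1 ∨ s n = -1) ∧
        |(∑ n ∈ Finset.Icc 1 N, s n / (b n : ℝ)) - τ| < Real.exp (-f N)) := by
  intro τ ε hε
  set p : ℕ → ℕ := Nat.nth (PrimeProd k) with hpdef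
  have hbp : ∀ n, b (n + 1) = p n := fun n => hb (n + 1) (by omega)
  have hinf := primeProd_infinite k hk
  have hp : StrictMono p := Nat.nth_strictMono hinf
  have hP : ∀ n, PrimeProd k (p n) := fun n => Nat.nth_mem_of_infinite hinf n
  have hpos : ∀ n, 0 < p n := fun n => Nat.pos_of_ne_zero (hP n).1.ne_zero
  obtain ⟨C, hC, hgr⟩ := primeProd_growth k hk
  have hns := primeProd_not_summable k hk
  have hgrow := tendsto_density k p C hgr
  have hIcc : ∀ (M : Type) [CommMonoid M] (F : ℕ → M) (N : ℕ),
      ∏ n ∈ Finset.Icc 1 N, F n = ∏ n ∈ Finset.range N, F (n + 1) := by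
    intro M _ F N
    rw [Finset.range_eq_Ico, Finset.prod_Ico_add' F 0 N 1]
    rfl
  have hIccS : ∀ (F : ℕ → ℝ) (N : ℕ),
      ∑ n ∈ Finset.Icc 1 N, F n = ∑ n ∈ Finset.range N, F (n + 1) := by
    intro F N
    rw [Finset.range_eq_Ico, Finset.sum_Ico_add' F 0 N 1]
    rfl
  have hφ : ∀ v, Tendsto (fun N => phiN p N v) atTop (nhds (ϱ (2 * v))) := by
    intro v
    refine (hϱ (2 * v)).congr fun N => ?_
    rw [hIcc]
    unfold phiN
    refine Finset.prod_congr rfl fun n _ => ?_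
    rw [hbp]
    congr 1
    ring
  have hgd : g τ = density (fun v => ϱ (2 * v)) τ := hg τ
  -- The second growth hypothesis, with the root cleared
  have hf2' : Tendsto (fun N : ℕ => f N ^ (2 * k + 1) * (p (N - 1) : ℝ) ^ 2 / (N : ℝ) ^ 3)
      atTop (nhds 0) := by
    have h1 := hf2.pow (2 * k + 1)
    rw [zero_pow (by omega)] at h1
    refine h1.congr' ?_
    filter_upwards [eventually_ge_atTop 1] with N hN
    have hN0 : (0 : ℝ) < N := by exact_mod_cast hN
    have hbN : b N = p (N - 1) := hb N hN
    have hb0 : (0 : ℝ) < p (N - 1) := by exact_mod_cast hpos _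
    rw [hBk N hN, hbN, div_pow, ← Real.rpow_natCast (_ ^ _), ← Real.rpow_mul (by positivity)]
    have : (1 : ℝ) / (2 * (k : ℝ) + 1) * ((2 * k + 1 : ℕ) : ℝ) = 1 := by
      push_cast
      field_simp
    rw [this, Real.rpow_one]
    field_simp
  -- The counting estimate, along all admissible pairs `(N, δ)`
  have hA : ∃ N1 : ℕ, ∃ δ1 : ℝ, 0 < δ1 ∧ ∀ N : ℕ, N1 ≤ N → ∀ δ : ℝ, 0 < δ → δ < δ1 →
      Real.exp (-f N) ≤ δ →
      |(Nat.card {s : Fin N → ({-1, 1} : Finset ℝ) // |τ - signSum p N s| < δ} : ℝ) / (2 ^ N * δ) -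
        2 * g τ| < 2 * ε := by
    have hcount := count_tendsto hp hP hgrow hφ
      (l := (atTop ×ˢ nhdsWithin (0 : ℝ) (Set.Ioi 0)) ⊓
        𝓟 {q : ℕ × ℝ | Real.exp (-f q.1) ≤ q.2}) (N := Prod.fst) (δ := Prod.snd)
      (t := fun _ => τ) (t0 := τ)
      (tendsto_fst.mono_left inf_le_left)
      ((tendsto_snd.mono_left inf_le_left).mono_right nhdsWithin_le_nhds)
      ((tendsto_snd.mono_left inf_le_left).eventually self_mem_nhdsWithin)
      tendsto_const_nhds ?_
    · rw [← hgd] at hcount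
      have h1 := (Metric.tendsto_nhds.mp hcount) (2 * ε) (by positivity)
      rw [eventually_inf_principal,
        (atTop_basis.prod (nhdsGT_basis (0 : ℝ))).eventually_iff] at h1
      obtain ⟨⟨N1, δ1⟩, ⟨-, hδ1⟩, h2⟩ := h1
      refine ⟨N1, δ1, hδ1, fun N hN δ hδ hδ' hexp => ?_⟩
      have := @h2 (N, δ) ⟨hN, hδ, hδ'⟩ hexp
      rwa [Real.dist_eq] at this
    · have hN : Tendsto (Prod.fst : ℕ × ℝ → ℕ) ((atTop ×ˢ nhdsWithin (0 : ℝ) (Set.Ioi 0)) ⊓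
        𝓟 {q : ℕ × ℝ | Real.exp (-f q.1) ≤ q.2}) atTop := tendsto_fst.mono_left inf_le_left
      have hδ : Tendsto (Prod.snd : ℕ × ℝ → ℝ) ((atTop ×ˢ nhdsWithin (0 : ℝ) (Set.Ioi 0)) ⊓
        𝓟 {q : ℕ × ℝ | Real.exp (-f q.1) ≤ q.2}) (nhdsWithin (0 : ℝ) (Set.Ioi 0)) :=
          tendsto_snd.mono_left inf_le_left
      have hlog : ∀ᶠ q : ℕ × ℝ in (atTop ×ˢ nhdsWithin (0 : ℝ) (Set.Ioi 0)) ⊓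
          𝓟 {q : ℕ × ℝ | Real.exp (-f q.1) ≤ q.2},
          0 ≤ Real.log (1 / q.2) ∧ Real.log (1 / q.2) ≤ f q.1 := by
        filter_upwards [hδ.eventually self_mem_nhdsWithin,
          (hδ.mono_right nhdsWithin_le_nhds).eventually_le_const one_pos,
          mem_inf_of_right (mem_principal_self _)] with q h0 h1 h2
        have h0' : 0 < q.2 := h0
        refine ⟨Real.log_nonneg ((one_le_div h0').mpr h1), ?_⟩
        rw [one_div, Real.log_inv]
        have : -f q.1 ≤ Real.log q.2 := (Real.le_log_iff_exp_le h0').mpr h2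
        linarith
      refine tendsto_of_tendsto_of_tendsto_of_le_of_le' tendsto_const_nhds (hf2'.comp hN) ?_ ?_
      · filter_upwards [hlog] with q hq
        have := hq.1
        positivity
      · filter_upwards [hlog] with q hq
        simp only [Function.comp_apply]
        have := hq.1
        have := hq.2
        gcongr
  -- `log N / f N → 0` does not force `f N > 0`, since division by `0` gives `0` and `f` may be negative.
  -- Approximation within `1` is enough where `f N ≤ 0`.
  have hB : ∀ᶠ N : ℕ in atTop, ∃ s : ℕ → ℝ, (∀ n, s n = 1 ∨ s n = -1) ∧
      |(∑ n ∈ Finset.range N, s n / (p n : ℝ)) - τ| < 1 := by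
    obtain ⟨s, hs, hlim⟩ := exists_signs_tendsto (fun n => (1 : ℝ) / p n)
      (fun n => by have := hpos n; positivity)
      (by
        simp only [one_div]
        exact tendsto_inv_atTop_zero.comp (tendsto_natCast_atTop_atTop.comp hp.tendsto_atTop))
      hns τ
    filter_upwards [(Metric.tendsto_nhds.mp hlim) 1 one_pos] with N hN
    refine ⟨s, hs, ?_⟩
    simpa only [Real.dist_eq, mul_one_div] using hN
  have hD : ∀ᶠ N : ℕ in atTop, 0 < f N → ∃ s : ℕ → ℝ, (∀ n, s n = 1 ∨ s n = -1) ∧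
      |(∑ n ∈ Finset.range N, s n / (p n : ℝ)) - τ| < Real.exp (-f N) := by
    have hle : (atTop ⊓ 𝓟 {N : ℕ | 0 < f N}) ≤ atTop := inf_le_left
    -- Where `f` is positive, it dominates `log`, so `exp (-f N) → 0`.
    have hflog : ∀ᶠ N : ℕ in atTop ⊓ 𝓟 {N : ℕ | 0 < f N}, Real.log N ≤ f N := by
      filter_upwards [hle (hf1.eventually_le_const one_pos),
        mem_inf_of_right (mem_principal_self _)] with N h1 h2
      rwa [div_le_one h2] at h1
    have hfinf : Tendsto f (atTop ⊓ 𝓟 {N : ℕ | 0 < f N}) atTop :=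
      tendsto_atTop_mono' _ hflog
        ((Real.tendsto_log_atTop.comp tendsto_natCast_atTop_atTop).mono_left hle)
    have := exists_signs_near hp hP hC hgr hns hle (δ := fun N => Real.exp (-f N))
      (Real.tendsto_exp_neg_atTop_nhds_zero.comp hfinf)
      (Eventually.of_forall fun N => Real.exp_pos _)
      (by
        refine (hf2'.mono_left hle).congr fun N => ?_
        rw [one_div, Real.log_inv, Real.log_exp, neg_neg]) τ
    exact eventually_inf_principal.mp this
  obtain ⟨N1, δ1, hδ1, hA⟩ := hA
  obtain ⟨N2, hBD⟩ := eventually_atTop.mp (hB.and hD)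
  obtain ⟨N3, hN3⟩ := exists_nat_gt (1 / δ1)
  have hN3' : (0 : ℝ) < N3 := lt_trans (by positivity) hN3
  refine ⟨max (max N1 N2) N3, ?_, ?_, ?_⟩
  · have : 0 < N3 := by exact_mod_cast hN3'
    omega
  · intro N hN δ hδ hδ'
    have hδ0 : 0 < δ := (Real.exp_pos _).trans_le hδ
    have hlt : δ < δ1 := by
      refine hδ'.trans_lt (lt_of_le_of_lt (one_div_le_one_div_of_le hN3' ?_)
        ((one_div_lt hδ1 hN3').mp hN3))
      exact_mod_cast le_max_right _ _
    have h := hA N (by omega) δ hδ0 hlt hδ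
    have hset : ∀ s : Fin N → ({-1, 1} : Finset ℝ),
        ∑ n : Fin N, (s n : ℝ) / (b ((n : ℕ) + 1) : ℝ) = signSum p N s := by
      intro s
      unfold signSum
      simp only [hbp]
    simp only [hset]
    have hD0 : (0 : ℝ) < 2 ^ N * δ := by positivity
    have h2 := mul_le_mul_of_nonneg_right h.le hD0.le
    rw [← abs_of_pos hD0, ← abs_mul, abs_of_pos hD0, sub_mul, div_mul_cancel₀ _ hD0.ne'] at h2
    calc _ = _ := by
          congr 1
          rw [pow_succ]
          ring
      _ ≤ _ := h2
      _ = _ := by rw [pow_succ]; ring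
  · intro N hN
    have hkey : ∃ s : ℕ → ℝ, (∀ n, s n = 1 ∨ s n = -1) ∧
        |(∑ n ∈ Finset.range N, s n / (p n : ℝ)) - τ| < Real.exp (-f N) := by
      obtain ⟨h1, h2⟩ := hBD N (by omega)
      rcases lt_or_ge 0 (f N) with hf | hf
      · exact h2 hf
      · obtain ⟨s, hs, h⟩ := h1
        exact ⟨s, hs, h.trans_le (Real.one_le_exp (by linarith))⟩
    obtain ⟨s, hs, h⟩ := hkey
    refine ⟨fun n => s (n - 1), fun n => hs _, ?_⟩
    rw [hIccS]
    simpa only [hbp, Nat.add_sub_cancel] using h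
end

section
/- Fix an integer k ≥ 1 and let b_n^{(k)} denote the n-th element, in increasing order, of the set of positive integers that are products of exactly k distinct primes. Then the function g(x) = 2∫_0^∞ cos(2πux) ϱ(2u) du, where ϱ(x) = ∏_{n=1}^∞ cos(πx/b_n^{(k)}), is well defined and infinitely differentiable on ℝ, and for every D > 0 there is a constant C_D such that |g(x)| ≤ C_D |x|^{−D} for all |x| ≥ 1. -/
open Filter Real MeasureTheory

/-!
Write `a n = 2π / b (n + 1)` and `F z = ∏ n, cos (a n * z)`, so that `ϱ (2 * u) = F u` for real `u`.
Since `b (n + 1) ≥ n + 1`, the sum `∑ (a n)²` converges; hence the product converges locally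
uniformly and `F` is entire (`cosProd_aux`).

The function `u ↦ F u` is a Schwartz function on the real line, and `g` is its Fourier transform
(`F` is real and even on the line), hence Schwartz too. This gives integrability, smoothness and
rapid decay simultaneously (`cosine_transform_of_schwartz`).

To see that `F` is Schwartz it suffices, by Cauchy's estimates on discs of a fixed radius, to show
that `F` decays faster than any power in a horizontal strip (`schwartz_of_strip`). There
`|cos (α + iβ)|² = cosh² β - sin² α ≤ exp (β² - sin² α / 3)` for `|β| ≤ 1`, so that
`|F (x + iy)|² ≤ exp (O(1) - (1/3) ∑ sin² (a n * x))`, and the point is that this last sum of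
squares exceeds any multiple of `log x` for large `x` (`eventually_sum_sin_sq`). Let `m` be a fixed
product of `k - 1` distinct primes. For primes `p` with `4x < p ≤ 32x`, the number `m * p` is one of
the `b n`, and `2πx / (m * p)` lies in `(0, π/2]` and is bounded below, so each such prime
contributes at least a positive constant. By Chebyshev's bounds on `θ` the number of these primes
is at least of order `x / log x`, which dominates `log x` (`eventually_log_le_card_primes`).
-/

/-! ### Primes in `(y, 8y]` -/

/-- By Chebyshev's bounds, `(y, 8y]` contains at least of order `y / log y` primes, which is more
than any multiple of `log y`. -/
theorem eventually_log_le_card_primes (K : ℝ) :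
    ∀ᶠ y : ℝ in atTop,
      K * Real.log y ≤ (((Finset.Ioc ⌊y⌋₊ ⌊8 * y⌋₊).filter Nat.Prime).card : ℝ) := by
  -- `log (8y)² ≤ ε * 8y` with this `ε` absorbs both the error term in the lower bound for
  -- `θ (8y)` and the factor `K * log y * log (8y)`.
  set ε : ℝ := min (1 / 1024) (1 / (8 * (|K| + 1))) with hε
  have hε0 : 0 < ε := by positivity
  have h8 : Tendsto (fun y : ℝ => 8 * y) atTop atTop :=
    tendsto_id.const_mul_atTop (by norm_num)
  have hL2 := h8.eventually ((isLittleO_pow_log_id_atTop (n := 2)).bound hε0)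
  have hL1 := h8.eventually (Real.tendsto_log_atTop.eventually_ge_atTop 1)
  filter_upwards [hL2, hL1, eventually_ge_atTop 10] with y hL2 hL1 hy
  set L := Real.log (8 * y) with hL
  have hLsq : L ^ 2 ≤ ε * (8 * y) := by
    simpa [abs_of_nonneg (show (0:ℝ) ≤ y by linarith)] using hL2
  have hLsq1 : L ^ 2 ≤ y / 128 := by
    have : ε * (8 * y) ≤ 1 / 1024 * (8 * y) := by gcongr; exact min_le_left _ _
    linarith
  have hLsq2 : (|K| + 1) * L ^ 2 ≤ y := by
    have h1 : ε * (8 * y) ≤ 1 / (8 * (|K| + 1)) * (8 * y) := by gcongr; exact min_le_right _ _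
    have h2 : (|K| + 1) * (1 / (8 * (|K| + 1)) * (8 * y)) = y := by field_simp
    calc (|K| + 1) * L ^ 2 ≤ (|K| + 1) * (1 / (8 * (|K| + 1)) * (8 * y)) := by
          gcongr; linarith
      _ = y := h2
  have hsq : √(8 * y) * L ≤ y / 4 := by
    apply le_of_sq_le_sq _ (by positivity)
    rw [mul_pow, Real.sq_sqrt (by positivity)]
    nlinarith
  have hlog2 : Real.log (8 * y + 2) ≤ 2 * L := by
    rw [hL, ← Real.log_rpow (by positivity)]
    apply Real.log_le_log (by positivity)
    norm_num
    nlinarith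
  have hlow := Chebyshev.theta_ge' (x := 8 * y) (by linarith)
  have hup := Chebyshev.theta_le_log4_mul_x (x := y) (by linarith)
  have h4 : Real.log 4 = 2 * Real.log 2 := by
    rw [show (4 : ℝ) = 2 ^ 2 by norm_num, Real.log_pow]; norm_num
  have hl2 := Real.log_two_gt_d9
  have hl2' := Real.log_two_lt_d9
  have hdiff : y ≤ Chebyshev.theta (8 * y) - Chebyshev.theta y := by
    have : y * 0.69 ≤ y * Real.log 2 := by gcongr; linarith
    rw [h4] at hup
    nlinarith
  have hsum : Chebyshev.theta (8 * y) - Chebyshev.theta y ≤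
      (((Finset.Ioc ⌊y⌋₊ ⌊8 * y⌋₊).filter Nat.Prime).card : ℝ) * L := by
    have hle : ⌊y⌋₊ ≤ ⌊8 * y⌋₊ := Nat.floor_mono (by linarith)
    have hsub : (Finset.Ioc 0 ⌊8 * y⌋₊).filter Nat.Prime =
        (Finset.Ioc 0 ⌊y⌋₊).filter Nat.Prime ∪ (Finset.Ioc ⌊y⌋₊ ⌊8 * y⌋₊).filter Nat.Prime := by
      rw [← Finset.filter_union, Finset.Ioc_union_Ioc_eq_Ioc (by omega) hle]
    have hdisj : Disjoint ((Finset.Ioc 0 ⌊y⌋₊).filter Nat.Prime)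
        ((Finset.Ioc ⌊y⌋₊ ⌊8 * y⌋₊).filter Nat.Prime) := by
      apply Finset.disjoint_filter_filter
      rw [Finset.disjoint_left]
      intro a ha hb
      simp only [Finset.mem_Ioc] at ha hb
      omega
    rw [Chebyshev.theta, Chebyshev.theta, hsub, Finset.sum_union hdisj, add_sub_cancel_left,
      ← nsmul_eq_mul]
    apply Finset.sum_le_card_nsmul
    intro p hp
    simp only [Finset.mem_filter, Finset.mem_Ioc] at hp
    apply Real.log_le_log (by exact_mod_cast hp.2.pos)
    exact (Nat.le_floor_iff (by positivity)).1 hp.1.2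
  have hKL : K * Real.log y * L ≤ y := by
    have h0 : 0 ≤ Real.log y := Real.log_nonneg (by linarith)
    have h1 : Real.log y ≤ L := Real.log_le_log (by linarith) (by linarith)
    calc K * Real.log y * L ≤ (|K| + 1) * L * L := by
          gcongr
          linarith [le_abs_self K]
      _ ≤ y := by nlinarith
  exact le_of_mul_le_mul_right (hKL.trans (hdiff.trans hsum)) (by linarith)

/-! ### The entire function `∏ cos (a n * z)` -/

/-- From `|cos (α + iβ)|² = cosh² β - sin² α`, with `cosh² β ≤ exp (β²) ≤ 3` for `|β| ≤ 1`. -/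
theorem norm_cos_sq_le (z : ℂ) (hz : |z.im| ≤ 1) :
    ‖Complex.cos z‖ ^ 2 ≤ Real.exp (z.im ^ 2 - Real.sin z.re ^ 2 / 3) := by
  have h1 : ‖Complex.cos z‖ ^ 2 = Real.cosh z.im ^ 2 - Real.sin z.re ^ 2 := by
    rw [Complex.cos_eq, ← Complex.normSq_eq_norm_sq, Complex.normSq_apply]
    simp only [← Complex.ofReal_cos, ← Complex.ofReal_sin, ← Complex.ofReal_cosh,
      ← Complex.ofReal_sinh, ← Complex.ofReal_mul, Complex.sub_re, Complex.sub_im,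
      Complex.ofReal_re, Complex.ofReal_im, Complex.re_ofReal_mul, Complex.im_ofReal_mul,
      Complex.I_re, Complex.I_im]
    have hc := Real.sin_sq_add_cos_sq z.re
    have hh := Real.cosh_sq z.im
    have : Real.cos z.re ^ 2 = 1 - Real.sin z.re ^ 2 := by linarith
    ring_nf
    rw [this, hh]
    ring
  have h2 : Real.cosh z.im ^ 2 ≤ Real.exp (z.im ^ 2) := by
    calc Real.cosh z.im ^ 2 ≤ Real.exp (z.im ^ 2 / 2) ^ 2 := by
          gcongr
          exact Real.cosh_le_exp_half_sq _
      _ = Real.exp (z.im ^ 2) := by rw [← Real.exp_nat_mul]; congr 1; push_cast; ring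
  have h3 : Real.exp (z.im ^ 2) ≤ 3 := by
    have : Real.exp (z.im ^ 2) ≤ Real.exp 1 := Real.exp_le_exp.2 (by
      rw [← sq_abs]; nlinarith [abs_nonneg z.im])
    linarith [Real.exp_one_lt_d9]
  rw [h1, sub_eq_add_neg (z.im ^ 2), Real.exp_add]
  have h4 : 1 - Real.sin z.re ^ 2 / 3 ≤ Real.exp (-(Real.sin z.re ^ 2 / 3)) := by
    linarith [Real.add_one_le_exp (-(Real.sin z.re ^ 2 / 3))]
  calc Real.cosh z.im ^ 2 - Real.sin z.re ^ 2
      ≤ Real.exp (z.im ^ 2) * (1 - Real.sin z.re ^ 2 / 3) := by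
        nlinarith [sq_nonneg (Real.sin z.re)]
    _ ≤ _ := by gcongr

/-- The infinite product `∏ n, cos (a n * z)` as a function of a complex variable. It is meaningful
when `∑ (a n)²` converges; `tprod` assigns the value `1` where the product fails to converge. -/
noncomputable def cosProd (a : ℕ → ℝ) (z : ℂ) : ℂ := ∏' n, Complex.cos (a n * z)

/-- If `∑ (a n)²` converges then the product defines an entire function, because
`cos w - 1 = O(w²)`. -/
theorem cosProd_aux {a : ℕ → ℝ} (ha : Summable fun n => a n ^ 2) :
    Differentiable ℂ (cosProd a) ∧ ∀ z, Tendsto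
      (fun N => ∏ n ∈ Finset.range N, Complex.cos (a n * z)) atTop (nhds (cosProd a z)) := by
  have key : ∀ R : ℝ, 0 < R → HasProdLocallyUniformlyOn
      (fun n (z : ℂ) => Complex.cos (a n * z)) (cosProd a) (Metric.ball 0 R) := by
    intro R hR
    have := Summable.hasProdLocallyUniformlyOn_nat_one_add (f := fun n (z : ℂ) => Complex.cos (a n * z) - 1)
      (K := Metric.ball (0 : ℂ) R) Metric.isOpen_ball (u := fun n => R ^ 2 * a n ^ 2)
      (ha.mul_left _) ?_ (fun n => by fun_prop)
    · simp only [add_sub_cancel] at this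
      exact this
    · have h0 := ha.tendsto_atTop_zero
      filter_upwards [h0.eventually_lt_const (show (0:ℝ) < 1 / R ^ 2 by positivity)]
        with n hn z hz
      have hz' : ‖z‖ < R := by simpa using hz
      have hw2 : ‖(a n * z : ℂ)‖ ^ 2 ≤ R ^ 2 * a n ^ 2 := by
        rw [norm_mul, mul_pow, Complex.norm_real, Real.norm_eq_abs, sq_abs, mul_comm]
        gcongr
      have hw1 : ‖(a n * z : ℂ)‖ ^ 2 ≤ 1 := by
        refine hw2.trans ?_
        rw [lt_div_iff₀ (by positivity)] at hn
        linarith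
      have hw : ‖(a n * z : ℂ)‖ ≤ 1 := by
        nlinarith [norm_nonneg (a n * z : ℂ)]
      set w : ℂ := a n * z
      have hb := Complex.cos_bound hw
      calc ‖Complex.cos w - 1‖ = ‖(Complex.cos w - (1 - w ^ 2 / 2)) - w ^ 2 / 2‖ := by
            congr 1; ring
        _ ≤ ‖w‖ ^ 4 * (5 / 96) + ‖w ^ 2 / 2‖ := (norm_sub_le _ _).trans (by gcongr)
        _ = ‖w‖ ^ 2 * ‖w‖ ^ 2 * (5 / 96) + ‖w‖ ^ 2 / 2 := by
            rw [norm_div, norm_pow]; norm_num; ring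
        _ ≤ ‖w‖ ^ 2 := by nlinarith [sq_nonneg ‖w‖]
        _ ≤ _ := hw2
  constructor
  · intro z
    have h := (key (‖z‖ + 1) (by positivity))
    have hd : DifferentiableOn ℂ (cosProd a) (Metric.ball 0 (‖z‖ + 1)) := by
      refine TendstoLocallyUniformlyOn.differentiableOn
        (hasProdLocallyUniformlyOn_iff_tendstoLocallyUniformlyOn.1 h) (.of_forall fun s => ?_)
        Metric.isOpen_ball
      apply Differentiable.differentiableOn
      fun_prop
    exact hd.differentiableAt (Metric.isOpen_ball.mem_nhds (by simp))
  · intro z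
    exact ((key (‖z‖ + 1) (by positivity)).hasProd (by simp)).tendsto_prod_nat

theorem norm_cosProd_sq_le {a : ℕ → ℝ} (ha : Summable fun n => a n ^ 2) {r : ℝ}
    (har : ∀ n, |a n| * r ≤ 1) {z : ℂ} (hz : |z.im| ≤ r) (N : ℕ) :
    ‖cosProd a z‖ ^ 2 ≤ Real.exp (r ^ 2 * ∑' n, a n ^ 2 -
      (∑ n ∈ Finset.range N, Real.sin (a n * z.re) ^ 2) / 3) := by
  refine le_of_tendsto (((cosProd_aux ha).2 z).norm.pow 2) ?_
  filter_upwards [eventually_ge_atTop N] with M hM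
  rw [norm_prod, ← Finset.prod_pow]
  calc ∏ n ∈ Finset.range M, ‖Complex.cos (a n * z)‖ ^ 2
      ≤ ∏ n ∈ Finset.range M, Real.exp ((r ^ 2 * a n ^ 2) - Real.sin (a n * z.re) ^ 2 / 3) := by
        gcongr with n
        have him : (a n * z : ℂ).im = a n * z.im := by simp
        have hre : (a n * z : ℂ).re = a n * z.re := by simp
        refine (norm_cos_sq_le _ ?_).trans ?_
        · rw [him, abs_mul]
          exact (mul_le_mul_of_nonneg_left hz (abs_nonneg _)).trans (har n)
        · rw [him, hre, mul_pow, mul_comm (a n ^ 2), ← sq_abs z.im]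
          gcongr
    _ = Real.exp (r ^ 2 * ∑ n ∈ Finset.range M, a n ^ 2 -
          (∑ n ∈ Finset.range M, Real.sin (a n * z.re) ^ 2) / 3) := by
        rw [← Real.exp_sum, Finset.sum_sub_distrib, Finset.mul_sum, Finset.sum_div]
    _ ≤ _ := by
        gcongr
        · exact ha.sum_le_tsum _ fun n _ => sq_nonneg _

/-- If the sums `∑ sin² (a n * x)` outgrow every multiple of `log x`, then `cosProd a` decays faster
than any power in the strip `|Im z| ≤ r`. -/
theorem cosProd_decay {a : ℕ → ℝ} (ha : Summable fun n => a n ^ 2) {r : ℝ}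
    (har : ∀ n, |a n| * r ≤ 1)
    (hS : ∀ K : ℝ, ∀ᶠ x : ℝ in atTop, ∃ N, K * Real.log x ≤
      ∑ n ∈ Finset.range N, Real.sin (a n * x) ^ 2) (k : ℕ) :
    ∃ C : ℝ, ∀ z : ℂ, |z.im| ≤ r → |z.re| ^ k * ‖cosProd a z‖ ≤ C := by
  -- The squared norm carries the factor `exp (-(6k log |x|) / 3) = |x| ^ (-2k)`.
  obtain ⟨X, hX⟩ := eventually_atTop.1 (hS (6 * k))
  set B : ℝ := r ^ 2 * ∑' n, a n ^ 2
  refine ⟨√((max X 1 ^ k) ^ 2 * Real.exp B), fun z hz => Real.le_sqrt_of_sq_le ?_⟩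
  rw [mul_pow]
  have hM : 1 ≤ max X 1 := le_max_right _ _
  rcases le_total |z.re| (max X 1) with h | h
  · gcongr
    simpa using norm_cosProd_sq_le ha har hz 0
  · obtain ⟨N, hN⟩ := hX |z.re| ((le_max_left _ _).trans h)
    have hpos : 0 < |z.re| := by linarith
    have hsin : ∑ n ∈ Finset.range N, Real.sin (a n * |z.re|) ^ 2 =
        ∑ n ∈ Finset.range N, Real.sin (a n * z.re) ^ 2 := by
      refine Finset.sum_congr rfl fun n _ => ?_
      rcases abs_choice z.re with h | h <;> simp [h]
    rw [hsin] at hN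
    calc (|z.re| ^ k) ^ 2 * ‖cosProd a z‖ ^ 2
        ≤ (|z.re| ^ k) ^ 2 * Real.exp (B - (2 * k : ℕ) * Real.log |z.re|) := by
          gcongr
          refine (norm_cosProd_sq_le ha har hz N).trans (Real.exp_le_exp.2 ?_)
          push_cast
          linarith
      _ = 1 * Real.exp B := by
          rw [Real.exp_sub, Real.exp_nat_mul, Real.exp_log hpos, ← pow_mul, mul_comm k 2]
          field_simp
      _ ≤ _ := by
          gcongr
          exact one_le_pow₀ (one_le_pow₀ hM)

/-! ### From decay in a strip to Schwartz functions -/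

theorem iteratedDeriv_comp_ofReal {F : ℂ → ℂ} (hF : Differentiable ℂ F) (n : ℕ) :
    iteratedDeriv n (fun x : ℝ => F x) = fun x : ℝ => iteratedDeriv n F x := by
  induction n with
  | zero => simp
  | succ n ih =>
    rw [iteratedDeriv_succ, ih]
    ext x
    rw [iteratedDeriv_succ]
    have hd : Differentiable ℂ (iteratedDeriv n F) :=
      (hF.contDiff (n := ((n + 1 : ℕ) : ℕ∞))).differentiable_iteratedDeriv n
        (by exact_mod_cast Nat.lt_succ_self n)
    exact (hd x).hasDerivAt.comp_ofReal.deriv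

/-- An entire function that decays faster than any power in a strip around the real axis restricts
to a Schwartz function, by Cauchy's estimates on discs of radius `r`. -/
theorem schwartz_of_strip {F : ℂ → ℂ} (hF : Differentiable ℂ F) {r : ℝ} (hr : 0 < r)
    (hb : ∀ k : ℕ, ∃ C : ℝ, ∀ z : ℂ, |z.im| ≤ r → |z.re| ^ k * ‖F z‖ ≤ C) :
    ∃ f : SchwartzMap ℝ ℂ, ∀ x : ℝ, f x = F x := by
  refine ⟨⟨fun x : ℝ => F x, ?_, ?_⟩, fun x => rfl⟩
  · exact ((hF.contDiff (n := _)).restrict_scalars ℝ).comp Complex.ofRealCLM.contDiff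
  · intro k n
    obtain ⟨C₀, hC₀⟩ := hb 0
    obtain ⟨C, hC⟩ := hb k
    set M : ℝ := 2 ^ (k - 1) * (C + r ^ k * C₀)
    refine ⟨n.factorial * M / r ^ n, fun x => ?_⟩
    rw [norm_iteratedFDeriv_eq_norm_iteratedDeriv, iteratedDeriv_comp_ofReal hF]
    -- The constant factor `x ^ k` is put inside the function so that Cauchy's estimate also covers
    -- small `x` without a division.
    have hcauchy := Complex.norm_iteratedDeriv_le_of_forall_mem_sphere_norm_le (c := (x : ℂ))
      (f := fun z => ((x : ℂ) ^ k) * F z) (C := M) n hr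
      ((hF.const_mul _).diffContOnCl) ?_
    · rwa [iteratedDeriv_const_mul_field, norm_mul, norm_pow, Complex.norm_real] at hcauchy
    · intro z hz
      rw [mem_sphere_iff_norm] at hz
      have him : |z.im| ≤ r := by
        have := Complex.abs_im_le_norm (z - x)
        simpa [hz] using this
      have hre : |x| ≤ |z.re| + r := by
        have h1 := Complex.abs_re_le_norm (z - x)
        rw [hz] at h1
        simp only [Complex.sub_re, Complex.ofReal_re] at h1
        have := abs_sub_abs_le_abs_sub x z.re
        rw [abs_sub_comm] at this
        linarith
      have h0 := hC₀ z him
      have hk := hC z him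
      rw [pow_zero, one_mul] at h0
      rw [norm_mul, norm_pow, Complex.norm_real, Real.norm_eq_abs]
      calc |x| ^ k * ‖F z‖ ≤ (2 ^ (k - 1) * (|z.re| ^ k + r ^ k)) * ‖F z‖ := by
            gcongr
            exact (pow_le_pow_left₀ (abs_nonneg _) hre k).trans
              (add_pow_le (abs_nonneg _) hr.le k)
        _ = 2 ^ (k - 1) * (|z.re| ^ k * ‖F z‖ + r ^ k * ‖F z‖) := by ring
        _ ≤ 2 ^ (k - 1) * (C + r ^ k * C₀) := by gcongr

/-- For a real even Schwartz function the cosine integral is the real part of its Fourier transform,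
which is again a Schwartz function. -/
theorem cosine_transform_of_schwartz (f : SchwartzMap ℝ ℂ) (h : ℝ → ℝ)
    (hf : ∀ x, f x = h x) (heven : ∀ x, h (-x) = h x) :
    (∀ x : ℝ, IntegrableOn (fun u : ℝ => Real.cos (2 * π * u * x) * h u) (Set.Ioi 0)) ∧
    ContDiff ℝ (⊤ : ℕ∞)
      (fun x : ℝ => 2 * ∫ u in Set.Ioi (0 : ℝ), Real.cos (2 * π * u * x) * h u) ∧
    (∀ D : ℝ, 0 < D → ∃ C : ℝ, ∀ x : ℝ, 1 ≤ |x| →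
      |2 * ∫ u in Set.Ioi (0 : ℝ), Real.cos (2 * π * u * x) * h u| ≤ C * |x| ^ (-D)) := by
  have hre : ∀ x u : ℝ, (Complex.exp (↑(-2 * π * u * x) * Complex.I) • f u).re =
      Real.cos (2 * π * u * x) * h u := by
    intro x u
    rw [hf, smul_eq_mul, Complex.re_mul_ofReal, Complex.exp_ofReal_mul_I_re]
    congr 1
    rw [← Real.cos_neg]
    congr 1
    ring
  have hint : ∀ x : ℝ, Integrable
      (fun u : ℝ => Complex.exp (↑(-2 * π * u * x) * Complex.I) • f u) := by
    intro x
    refine f.integrable.norm.mono' ?_ (.of_forall fun u => ?_)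
    · have := f.continuous
      exact Continuous.aestronglyMeasurable (by fun_prop)
    · rw [norm_smul, Complex.norm_exp_ofReal_mul_I, one_mul]
  have hintre : ∀ x : ℝ, Integrable (fun u : ℝ => Real.cos (2 * π * u * x) * h u) := by
    intro x
    simpa only [← hre] using! (hint x).re
  have hg : (fun x : ℝ => 2 * ∫ u in Set.Ioi (0 : ℝ), Real.cos (2 * π * u * x) * h u) =
      fun x => ((FourierTransform.fourier f : SchwartzMap ℝ ℂ) x).re := by
    ext x
    rw [SchwartzMap.fourier_coe, Real.fourier_real_eq_integral_exp_smul]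
    have h1 := integral_re (hint x)
    simp only [RCLike.re_eq_complex_re] at h1
    rw [← h1, ← integral_comp_abs (f := fun u => Real.cos (2 * π * u * x) * h u)]
    refine integral_congr_ae (.of_forall fun u => ?_)
    simp only [hre]
    rcases abs_choice u with h | h <;> rw [h]
    rw [heven, ← Real.cos_neg]
    congr 2
    ring
  refine ⟨fun x => (hintre x).integrableOn, ?_, fun D hD => ?_⟩
  · rw [hg]
    exact Complex.reCLM.contDiff.comp (SchwartzMap.smooth _ _)
  · obtain ⟨C, hC0, hC⟩ := (FourierTransform.fourier f : SchwartzMap ℝ ℂ).decay ⌈D⌉₊ 0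
    refine ⟨C, fun x hx => ?_⟩
    have hx0 : 0 < |x| := by linarith
    rw [congrFun hg x, Real.rpow_neg hx0.le, ← div_eq_mul_inv, le_div_iff₀ (by positivity)]
    have h1 := hC x
    rw [norm_iteratedFDeriv_zero, Real.norm_eq_abs] at h1
    refine le_trans ?_ h1
    rw [mul_comm]
    gcongr
    · rw [← Real.rpow_natCast]
      exact Real.rpow_le_rpow_of_exponent_le hx (Nat.le_ceil D)
    · exact Complex.abs_re_le_norm _

/-! ### Products of `k` distinct primes -/

/-- A product `m` of `k - 1` distinct primes: multiplying it by any prime `p > m` gives a product of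
exactly `k` distinct primes. -/
theorem exists_cofactor (k : ℕ) (hk : 1 ≤ k) : ∃ m : ℕ, 0 < m ∧ ∀ p : ℕ, p.Prime → m < p →
    Squarefree (m * p) ∧ (m * p).primeFactors.card = k := by
  set s := (Finset.range (k - 1)).image (Nat.nth Nat.Prime) with hs
  have hp : ∀ p ∈ s, p.Prime := by
    intro p hp
    obtain ⟨i, -, rfl⟩ := Finset.mem_image.1 hp
    exact Nat.prime_nth_prime i
  have hcard : s.card = k - 1 := by
    rw [hs, Finset.card_image_of_injective _
      (Nat.nth_strictMono Nat.infinite_setOfPred_prime).injective, Finset.card_range]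
  set m := ∏ p ∈ s, p with hm
  have hm0 : 0 < m := Finset.prod_pos fun p h => (hp p h).pos
  refine ⟨m, hm0, fun p hpp hmp => ?_⟩
  have hcop : Nat.Coprime m p :=
    (Nat.coprime_of_lt_prime hm0.ne' hmp hpp).symm
  constructor
  · rw [Nat.squarefree_mul hcop]
    refine ⟨?_, hpp.prime.squarefree⟩
    exact Finset.squarefree_prod_of_pairwise_isCoprime
      (fun x hx y hy hxy => Nat.coprime_iff_isRelPrime.1 ((Nat.coprime_primes (hp x hx) (hp y hy)).2 hxy))
      (fun x hx => (hp x hx).prime.squarefree)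
  · rw [hcop.primeFactors_mul, Finset.card_union_of_disjoint hcop.disjoint_primeFactors,
      hpp.primeFactors, Finset.card_singleton, hm, Nat.primeFactors_prod hp, hcard]
    omega

/-- If every `m * p` with `p > m` prime satisfies `P`, then the `sin²` sum over the elements of `P`
outgrows every multiple of `log x`: each prime in `(4x, 32x]` contributes at least `1 / (64 m²)`. -/
theorem eventually_sum_sin_sq {P : ℕ → Prop} {m : ℕ} (hm : 0 < m)
    (hmP : ∀ p : ℕ, p.Prime → m < p → P (m * p)) (K : ℝ) :
    ∀ᶠ x : ℝ in atTop, ∃ N, K * Real.log x ≤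
      ∑ n ∈ Finset.range N, Real.sin (2 * π / (Nat.nth P n : ℝ) * x) ^ 2 := by
  classical
  have h4 : Tendsto (fun x : ℝ => 4 * x) atTop atTop :=
    tendsto_id.const_mul_atTop (by norm_num)
  filter_upwards [h4.eventually (eventually_log_le_card_primes (64 * m ^ 2 * |K|)),
    eventually_ge_atTop (m : ℝ)] with x hx hmx
  set S := (Finset.Ioc ⌊4 * x⌋₊ ⌊8 * (4 * x)⌋₊).filter Nat.Prime with hSdef
  have hm1 : (1 : ℝ) ≤ m := by exact_mod_cast hm
  have hx1 : 1 ≤ x := hm1.trans hmx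
  have hS : ∀ p ∈ S, p.Prime ∧ 4 * x < p ∧ (p : ℝ) ≤ 32 * x := by
    intro p hp
    simp only [hSdef, Finset.mem_filter, Finset.mem_Ioc] at hp
    refine ⟨hp.2, (Nat.floor_lt (by positivity)).1 hp.1.1, ?_⟩
    have := (Nat.le_floor_iff (by positivity)).1 hp.1.2
    linarith
  have hSP : ∀ p ∈ S, P (m * p) := by
    intro p hp
    obtain ⟨h1, h2, -⟩ := hS p hp
    exact hmP p h1 (by exact_mod_cast (show (m : ℝ) < p by linarith))
  have hnth : ∀ p ∈ S, Nat.nth P (Nat.count P (m * p)) = m * p := fun p hp =>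
    Nat.nth_count (hSP p hp)
  have hinj : Set.InjOn (fun p => Nat.count P (m * p)) S := by
    intro p hp q hq h
    have : m * p = m * q := by rw [← hnth p hp, ← hnth q hq]; exact congrArg _ h
    exact Nat.eq_of_mul_eq_mul_left hm this
  set T := S.image fun p => Nat.count P (m * p) with hT
  refine ⟨T.sup id + 1, ?_⟩
  have hsub : T ⊆ Finset.range (T.sup id + 1) := fun n hn =>
    Finset.mem_range.2 (Nat.lt_succ_of_le (Finset.le_sup (f := id) hn))
  have hterm : ∀ p ∈ S, 1 / (64 * (m : ℝ) ^ 2) ≤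
      Real.sin (2 * π / (Nat.nth P (Nat.count P (m * p)) : ℝ) * x) ^ 2 := by
    intro p hp
    obtain ⟨h1, h2, h3⟩ := hS p hp
    have hp0 : (0 : ℝ) < p := by linarith
    rw [hnth p hp]
    push_cast
    have ht : 2 * π / (m * p) * x ≤ π / 2 := by
      rw [div_mul_eq_mul_div, div_le_div_iff₀ (by positivity) (by norm_num)]
      have : 4 * x ≤ m * p := by nlinarith
      nlinarith [Real.pi_pos]
    -- Jordan's inequality `sin t ≥ 2t / π` on `[0, π/2]`
    have hsin := Real.mul_le_sin (x := 2 * π / (m * p) * x) (by positivity) ht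
    have hlow : 1 / (8 * (m : ℝ)) ≤ 2 / π * (2 * π / (m * p) * x) := by
      have : 2 / π * (2 * π / (m * p) * x) = 4 * x / (m * p) := by
        field_simp
        ring
      rw [this, div_le_div_iff₀ (by positivity) (by positivity)]
      nlinarith
    calc 1 / (64 * (m : ℝ) ^ 2) = (1 / (8 * (m : ℝ))) ^ 2 := by field_simp; norm_num
      _ ≤ _ := by
        gcongr
        exact hlow.trans hsin
  have hK : K * Real.log x ≤ |K| * Real.log (4 * x) := by
    have h0 : 0 ≤ Real.log x := Real.log_nonneg hx1
    have h1 : Real.log x ≤ Real.log (4 * x) := Real.log_le_log (by linarith) (by linarith)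
    calc K * Real.log x ≤ |K| * Real.log x := by gcongr; exact le_abs_self K
      _ ≤ _ := by gcongr
  calc K * Real.log x ≤ |K| * Real.log (4 * x) := hK
    _ ≤ S.card * (1 / (64 * (m : ℝ) ^ 2)) := by
        rw [mul_one_div, le_div_iff₀ (by positivity)]
        linarith
    _ ≤ ∑ p ∈ S, Real.sin (2 * π / (Nat.nth P (Nat.count P (m * p)) : ℝ) * x) ^ 2 := by
        rw [← nsmul_eq_mul]
        exact Finset.card_nsmul_le_sum _ _ _ hterm
    _ = ∑ n ∈ T, Real.sin (2 * π / (Nat.nth P n : ℝ) * x) ^ 2 := by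
        rw [hT, Finset.sum_image hinj]
    _ ≤ _ := Finset.sum_le_sum_of_subset_of_nonneg hsub fun _ _ _ => sq_nonneg _

theorem succ_le_nth {P : ℕ → Prop} (hP : (Set.ofPred P).Infinite) (h0 : ¬ P 0) (n : ℕ) :
    n + 1 ≤ Nat.nth P n := by
  induction n with
  | zero =>
    have := Nat.nth_mem_of_infinite hP 0
    exact Nat.one_le_iff_ne_zero.2 fun h => h0 (h ▸ this)
  | succ n ih => exact ih.trans_lt (Nat.nth_strictMono hP n.lt_succ_self)

/-! ### The density -/

theorem cosProd_ofReal {a : ℕ → ℝ} (ha : Summable fun n => a n ^ 2) (x : ℝ) :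
    cosProd a x = ((cosProd a x).re : ℂ) ∧
    Tendsto (fun N => ∏ n ∈ Finset.range N, Real.cos (a n * x)) atTop
      (nhds (cosProd a x).re) := by
  have h := (cosProd_aux ha).2 x
  have hcast : (fun N => ∏ n ∈ Finset.range N, Complex.cos (a n * (x : ℂ))) =
      fun N => ((∏ n ∈ Finset.range N, Real.cos (a n * x) : ℝ) : ℂ) := by
    ext N
    push_cast
    rfl
  rw [hcast] at h
  have hre : Tendsto (fun N => ∏ n ∈ Finset.range N, Real.cos (a n * x)) atTop
      (nhds (cosProd a x).re) := (Complex.continuous_re.tendsto _).comp h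
  exact ⟨tendsto_nhds_unique h ((Complex.continuous_ofReal.tendsto _).comp hre), hre⟩

/-- **Remark (smoothness and rapid decay of the density `g`).**
Fix `k ≥ 1` and let `b n` be the `n`-th element (in increasing order, `n ≥ 1`) of
the set of positive integers that are products of exactly `k` distinct primes.
Then the infinite product `ϱ(x) = ∏_{n=1}^∞ cos (π x / b n)` converges for every
`x`, the function `g(x) = 2 ∫_0^∞ cos (2πux) ϱ(2u) du` is well defined (the
integrand is integrable on `(0,∞)`) and infinitely differentiable on `ℝ`, and for
every `D > 0` there is `C_D` with `|g x| ≤ C_D |x|^{−D}` for all `|x| ≥ 1`. -/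
theorem density_smooth_and_decay
    (k : ℕ) (hk : 1 ≤ k)
    (b : ℕ → ℕ)
    (hb : ∀ n : ℕ, 1 ≤ n →
      b n = Nat.nth (fun m => Squarefree m ∧ m.primeFactors.card = k) (n - 1)) :
    ∃ ϱ : ℝ → ℝ,
      (∀ x : ℝ,
        Tendsto (fun N : ℕ => ∏ n ∈ Finset.Icc 1 N, Real.cos (π * x / (b n : ℝ)))
          atTop (nhds (ϱ x))) ∧
      (∀ x : ℝ,
        IntegrableOn (fun u : ℝ => Real.cos (2 * π * u * x) * ϱ (2 * u))
          (Set.Ioi 0)) ∧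
      ContDiff ℝ (⊤ : ℕ∞)
        (fun x : ℝ =>
          2 * ∫ u in Set.Ioi (0 : ℝ), Real.cos (2 * π * u * x) * ϱ (2 * u)) ∧
      (∀ D : ℝ, 0 < D → ∃ C : ℝ, ∀ x : ℝ, 1 ≤ |x| →
        |2 * ∫ u in Set.Ioi (0 : ℝ), Real.cos (2 * π * u * x) * ϱ (2 * u)| ≤
          C * |x| ^ (-D)) := by
  obtain ⟨m, hm, hmp⟩ := exists_cofactor k hk
  set P : ℕ → Prop := fun m => Squarefree m ∧ m.primeFactors.card = k with hPdef
  have hP : (Set.ofPred P).Infinite := by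
    have hinf := Nat.infinite_setOfPred_prime.sdiff (Set.finite_Iic m)
    refine (hinf.image (f := fun p => m * p)
      (fun p _ q _ h => Nat.eq_of_mul_eq_mul_left hm h)).mono ?_
    rintro _ ⟨p, ⟨hp, hpm⟩, rfl⟩
    exact hmp p hp (not_le.1 hpm)
  have hP0 : ¬ P 0 := fun h => not_squarefree_zero h.1
  have hnth := succ_le_nth hP hP0
  set a : ℕ → ℝ := fun n => 2 * π / (Nat.nth P n : ℝ) with ha_def
  have ha0 : ∀ n, 0 ≤ a n := fun n => by positivity
  have hale : ∀ n, a n ≤ 2 * π / ((n : ℝ) + 1) := fun n => by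
    have : ((n : ℝ) + 1) ≤ (Nat.nth P n : ℝ) := by exact_mod_cast hnth n
    simp only [ha_def]
    gcongr
  have ha : Summable fun n => a n ^ 2 := by
    have hs : Summable fun n : ℕ => (2 * π) ^ 2 * (1 / ((n + 1 : ℕ) : ℝ) ^ 2) :=
      ((summable_nat_add_iff 1).2
        (Real.summable_one_div_nat_pow.2 (by norm_num : 1 < 2))).mul_left _
    refine hs.of_nonneg_of_le (fun n => sq_nonneg _) fun n => ?_
    calc a n ^ 2 ≤ (2 * π / ((n : ℝ) + 1)) ^ 2 := pow_le_pow_left₀ (ha0 n) (hale n) 2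
      _ = _ := by rw [div_pow, mul_one_div]; push_cast; rfl
  have har : ∀ n, |a n| * (1 / (2 * π)) ≤ 1 := fun n => by
    rw [abs_of_nonneg (ha0 n), mul_one_div, div_le_one (by positivity)]
    refine (hale n).trans (div_le_self (by positivity) ?_)
    linarith [(Nat.cast_nonneg n : (0 : ℝ) ≤ n)]
  have hdecay := cosProd_decay ha har (eventually_sum_sin_sq hm hmp)
  obtain ⟨f, hf⟩ := schwartz_of_strip (cosProd_aux ha).1 (by positivity) hdecay
  refine ⟨fun x => (cosProd a ((x / 2 : ℝ) : ℂ)).re, fun x => ?_, ?_⟩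
  · refine (cosProd_ofReal ha (x / 2)).2.congr fun N => ?_
    rw [Finset.range_eq_Ico, ← Finset.Ico_add_one_right_eq_Icc,
      ← Finset.prod_Ico_add' (fun n => Real.cos (π * x / (b n : ℝ))) 0 N 1]
    refine Finset.prod_congr rfl fun n _ => ?_
    rw [hb (n + 1) (by omega), Nat.add_sub_cancel]
    congr 1
    simp only [ha_def]
    ring
  · simp only [mul_div_cancel_left₀ _ (two_ne_zero' ℝ)]
    refine cosine_transform_of_schwartz f (fun u => (cosProd a (u : ℂ)).re)
      (fun x => (hf x).trans (cosProd_ofReal ha x).1) fun x => ?_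
    simp [cosProd]
end
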